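/- (Theorem 3.3, hypercubic case, strong form) Fix an integer d ≥ 1, m > 0 and x, y ∈ ℝ^d with x ≠ y. Then the finite measures V'_{x,y,a} on Ω(x,y) converge weakly to (m²/2)·V'_{x,y} as a → 0⁺ along values of a with x − y ∈ aℤ^d. -/

import Mathlib

/-!
Fourier inversion on the torus expresses the characteristic functions of the finite-dimensional
marginals of `V'_{x,y,a,N}` as integrals of products of `meanCos`. Steps change the parity of the
coordinate sum, so that these measures vanish unless `N` has the right parity; in that case the
integral may be taken over half of the torus, on which `meanCos` is close to `1` in absolute value
only near the origin. Gaussian decay there and dominated convergence give twice the characteristic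
functions of the pinned Wiener measure `W_{x,y}^t` when `a → 0` and `N a² / d → t`.

Convergence of the marginals upgrades to weak convergence because paths are uniformly close to
their interpolations on a time grid: an exponential maximal inequality for half of the steps is
multiplied by the local limit bound `O(N^{-d/2})` for the other half, which accounts for the
pinning at `y`.

Finally the geometric series over `N` is an integral over `t` with `N = ⌊t d / a²⌋`. Pairing
consecutive values of `N` leaves one measure of the right parity in each pair, which turns the
density `2 W_{x,y}^t` into `W_{x,y}^t`. Since `x ≠ y`, the total masses are bounded uniformly in
`a` and `N`, and the dominated convergence theorem yields the factor `m² / 2`.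
-/

open MeasureTheory Filter Topology Real Set
open scoped RealInnerProductSpace ENNReal unitInterval

noncomputable section

/-- `ℝ^d` as a Euclidean space. -/
abbrev Ed (d : ℕ) := EuclideanSpace ℝ (Fin d)

/-- The space of continuous paths `[0,1] → ℝ^d`, with the uniform metric. -/
abbrev PathSp (d : ℕ) := C(unitInterval, Ed d)

instance (d : ℕ) : MeasurableSpace (PathSp d) := borel _
instance (d : ℕ) : BorelSpace (PathSp d) := ⟨rfl⟩

/-- Evaluation of a path at a real time, clamped to `[0,1]`. -/
def evalAt {d : ℕ} (ω : PathSp d) (t : ℝ) : Ed d := ω (Set.projIcc 0 1 zero_le_one t)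

/-- `Ω(x)`: continuous paths starting at `x`. -/
abbrev Omega1 {d : ℕ} (x : Ed d) := {ω : PathSp d // ω 0 = x}

/-- `Ω(x,y)`: continuous paths from `x` to `y`. -/
abbrev Omega2 {d : ℕ} (x y : Ed d) := {ω : PathSp d // ω 0 = x ∧ ω 1 = y}

/-- clamp a real number to `[0,1]`. -/
def clamp01 (r : ℝ) : ℝ := min 1 (max 0 r)

lemma clamp01_of_nonpos {r : ℝ} (h : r ≤ 0) : clamp01 r = 0 := by
  rw [clamp01, max_eq_left h, min_eq_right zero_le_one]

lemma clamp01_of_one_le {r : ℝ} (h : 1 ≤ r) : clamp01 r = 1 := by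
  rw [clamp01, max_eq_right (zero_le_one.trans h), min_eq_left h]

lemma clamp01_continuous : Continuous clamp01 :=
  continuous_const.min (continuous_const.max continuous_id)

/-- The piecewise linear path starting at `x` with `N` steps given by the increments `v i`,
the `i`-th step being linearly parametrized by `[i/N, (i+1)/N]`. -/
def pwLinE {d : ℕ} (x : Ed d) (N : ℕ) (v : Fin N → Ed d) : PathSp d :=
  ⟨fun t => x + ∑ i : Fin N, clamp01 ((N : ℝ) * (t : ℝ) - ((i : ℕ) : ℝ)) • v i, by
    refine continuous_const.add (continuous_finset_sum _ fun i _ => ?_)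
    exact ((clamp01_continuous.comp
      ((continuous_const.mul continuous_subtype_val).sub continuous_const)).smul
      continuous_const)⟩

lemma pwLinE_zero {d : ℕ} (x : Ed d) (N : ℕ) (v : Fin N → Ed d) :
    pwLinE x N v 0 = x := by
  show x + ∑ i : Fin N, clamp01 ((N : ℝ) * ((0 : unitInterval) : ℝ) - ((i : ℕ) : ℝ)) • v i = x
  have h : ∀ i : Fin N, clamp01 ((N : ℝ) * ((0 : unitInterval) : ℝ) - ((i : ℕ) : ℝ)) = 0 := by
    intro i
    apply clamp01_of_nonpos
    have h0 : ((0 : unitInterval) : ℝ) = 0 := rfl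
    rw [h0, mul_zero, zero_sub]
    exact neg_nonpos.mpr (Nat.cast_nonneg (i : ℕ))
  simp only [h, zero_smul, Finset.sum_const_zero, add_zero]

lemma pwLinE_one {d : ℕ} (x : Ed d) (N : ℕ) (v : Fin N → Ed d) :
    pwLinE x N v 1 = x + ∑ i : Fin N, v i := by
  show x + ∑ i : Fin N, clamp01 ((N : ℝ) * ((1 : unitInterval) : ℝ) - ((i : ℕ) : ℝ)) • v i
      = x + ∑ i : Fin N, v i
  have h : ∀ i : Fin N, clamp01 ((N : ℝ) * ((1 : unitInterval) : ℝ) - ((i : ℕ) : ℝ)) = 1 := by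
    intro i
    apply clamp01_of_one_le
    have h1 : ((1 : unitInterval) : ℝ) = 1 := rfl
    have h2 : ((i : ℕ) : ℝ) + 1 ≤ (N : ℝ) := by
      exact_mod_cast Nat.succ_le_of_lt i.isLt
    rw [h1, mul_one]; linarith
  simp only [h, one_smul]

/-- Piecewise linear element of `Ω(x)` with increments `v`. -/
def pwLin1 {d : ℕ} (x : Ed d) (N : ℕ) (v : Fin N → Ed d) : Omega1 x :=
  ⟨pwLinE x N v, pwLinE_zero x N v⟩

/-- Piecewise linear element of `Ω(x,y)` with increments `v` summing to `y - x`. -/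
def pwLin2 {d : ℕ} (x y : Ed d) (N : ℕ) (v : Fin N → Ed d)
    (h : x + ∑ i : Fin N, v i = y) : Omega2 x y :=
  ⟨pwLinE x N v, pwLinE_zero x N v, by rw [pwLinE_one, h]⟩

/-- the point preceding `x_i` in the list `x, x_1, …, x_N`. -/
def prevPt {d : ℕ} (x : Ed d) {N : ℕ} (xs : Fin N → Ed d) (i : Fin N) : Ed d :=
  if (i : ℕ) = 0 then x else xs ⟨(i : ℕ) - 1, lt_of_le_of_lt (Nat.pred_le _) i.isLt⟩

/-- The discrete measure `W_{x,a,N}`, i.e. the measure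
`∏_{i=1}^N (2πa²)^{-d/2} exp(-|x_i - x_{i-1}|²/(2a²)) dx_1 … dx_N` (with `x_0 = x`)
on `N`-step piecewise linear paths, placed on `{a²N} × Ω(x) ⊆ ℝ × Ω(x)`.
For `N = 0` this is the Dirac measure at `(0, constant path at x)`. -/
def WxaN {d : ℕ} (x : Ed d) (a : ℝ) (N : ℕ) : Measure (ℝ × Omega1 x) :=
  Measure.map
    (fun xs : Fin N → Ed d =>
      ((a ^ 2 * N : ℝ), pwLin1 x N fun i => xs i - prevPt x xs i))
    (volume.withDensity fun xs : Fin N → Ed d =>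
      ENNReal.ofReal (∏ i : Fin N,
        (2 * π * a ^ 2) ^ (-(d : ℝ) / 2) *
          Real.exp (-‖xs i - prevPt x xs i‖ ^ 2 / (2 * a ^ 2))))

/-- The approximating probability measure
`W_{x,a} = (1 - e^{-m²a²/2}) Σ_{N=0}^∞ e^{-m²a²N/2} W_{x,a,N}`. -/
def Wxa {d : ℕ} (x : Ed d) (m a : ℝ) : Measure (ℝ × Omega1 x) :=
  ENNReal.ofReal (1 - Real.exp (-m ^ 2 * a ^ 2 / 2)) •
    Measure.sum fun N : ℕ =>
      ENNReal.ofReal (Real.exp (-m ^ 2 * a ^ 2 * N / 2)) • WxaN x a N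

/-- The lattice step of length `a` in direction `p.1`, forwards or backwards
according to `p.2`. -/
def stepVec {d : ℕ} (a : ℝ) (p : Fin d × Bool) : Ed d :=
  (if p.2 then a else -a) • EuclideanSpace.single p.1 (1 : ℝ)

/-- The normalized counting measure `V'_{x,a,N}` giving mass `(2d)^{-N}` to each
(piecewise linearly parametrized) `N`-step nearest-neighbour lattice path in `x + aℤ^d`
starting at `x`.  For `N = 0` it is the Dirac measure at the constant path. -/
def VxaN {d : ℕ} (x : Ed d) (a : ℝ) (N : ℕ) : Measure (Omega1 x) :=
  Measure.sum fun s : Fin N → Fin d × Bool =>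
    (((2 * d : ℕ) : ℝ≥0∞) ^ N)⁻¹ •
      Measure.dirac (pwLin1 x N fun i => stepVec a (s i))

/-- The approximating probability measure
`V'_{x,a} = (1 - e^{-m²a²/(2d)}) Σ_{N=0}^∞ e^{-m²a²N/(2d)} V'_{x,a,N}`. -/
def Vxa {d : ℕ} (x : Ed d) (m a : ℝ) : Measure (Omega1 x) :=
  ENNReal.ofReal (1 - Real.exp (-m ^ 2 * a ^ 2 / (2 * d))) •
    Measure.sum fun N : ℕ =>
      ENNReal.ofReal (Real.exp (-m ^ 2 * a ^ 2 * N / (2 * d))) • VxaN x a N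

/-- `Wt` is the family of Wiener measures `(W_x^t)_{t>0}` on `Ω(x)`:
each `W_x^t` is a Borel probability measure, characterized by the characteristic
functions of its finite dimensional distributions
`∫ exp(i Σ_j ξ_j·ω(t_j)) dW_x^t = exp(-(t/2) Σ_j (t_j - t_{j-1}) |ξ_j + ⋯ + ξ_n|²
+ i x·(ξ_1 + ⋯ + ξ_n))` for all `0 = t_0 < t_1 < ⋯ < t_n ≤ 1`. -/
def IsWienerFamily {d : ℕ} (x : Ed d) (Wt : ℝ → Measure (Omega1 x)) : Prop :=
  ∀ t : ℝ, 0 < t → (IsProbabilityMeasure (Wt t) ∧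
    ∀ (n : ℕ) (ts : ℕ → ℝ), ts 0 = 0 → (∀ i < n, ts i < ts (i + 1)) → ts n ≤ 1 →
      ∀ ξ : Fin n → Ed d,
        (∫ ω : Omega1 x, Complex.exp (Complex.I *
            ((∑ i : Fin n, ⟪ξ i, evalAt ω.1 (ts ((i : ℕ) + 1))⟫ : ℝ) : ℂ)) ∂(Wt t))
          = Complex.exp
              (((-(t / 2) * ∑ i : Fin n,
                  (ts ((i : ℕ) + 1) - ts (i : ℕ)) * ‖∑ j ∈ Finset.Ici i, ξ j‖ ^ 2 : ℝ) : ℂ)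
                + Complex.I * ((⟪∑ j, ξ j, x⟫ : ℝ) : ℂ)))


/-- the sequence of points `x, vs 0, …, vs (N-1), y` (with value `y` from index `N+1` on). -/
def pinPts {d : ℕ} (x y : Ed d) {N : ℕ} (vs : Fin N → Ed d) (j : ℕ) : Ed d :=
  if h0 : j = 0 then x else if h : j ≤ N then vs ⟨j - 1, by omega⟩ else y

lemma pinPts_zero {d : ℕ} (x y : Ed d) {N : ℕ} (vs : Fin N → Ed d) :
    pinPts x y vs 0 = x := by simp [pinPts]

lemma pinPts_last {d : ℕ} (x y : Ed d) {N : ℕ} (vs : Fin N → Ed d) :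
    pinPts x y vs (N + 1) = y := by
  have h1 : ¬(N + 1 = 0) := Nat.succ_ne_zero N
  have h2 : ¬(N + 1 ≤ N) := by omega
  simp [pinPts, h1, h2]

lemma pin_telescope {d : ℕ} (x y : Ed d) {N : ℕ} (vs : Fin N → Ed d) :
    x + ∑ i : Fin (N + 1), (pinPts x y vs ((i : ℕ) + 1) - pinPts x y vs (i : ℕ)) = y := by
  rw [Fin.sum_univ_eq_sum_range (fun j => pinPts x y vs (j + 1) - pinPts x y vs j) (N + 1)]
  rw [Finset.sum_range_sub (fun j => pinPts x y vs j) (N + 1)]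
  rw [pinPts_zero, pinPts_last]
  abel

/-- The discrete measure `W_{x,y,a,N+1}`, i.e. the measure
`∏_{i=1}^{N+1} (2πa²)^{-d/2} exp(-|x_i - x_{i-1}|²/(2a²)) dx_1 … dx_N`
(with `x_0 = x`, `x_{N+1} = y`) on `(N+1)`-step piecewise linear paths from `x` to `y`,
placed on `{a²(N+1)} × Ω(x,y) ⊆ ℝ × Ω(x,y)`.  For `N = 0` this is the point mass of
weight `(2πa²)^{-d/2} e^{-|x-y|²/(2a²)}` at `(a², linear path from x to y)`. -/
def WxyaN {d : ℕ} (x y : Ed d) (a : ℝ) (N : ℕ) : Measure (ℝ × Omega2 x y) :=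
  Measure.map
    (fun vs : Fin N → Ed d =>
      ((a ^ 2 * (N + 1) : ℝ),
        pwLin2 x y (N + 1) (fun i => pinPts x y vs ((i : ℕ) + 1) - pinPts x y vs (i : ℕ))
          (pin_telescope x y vs)))
    (volume.withDensity fun vs : Fin N → Ed d =>
      ENNReal.ofReal (∏ i : Fin (N + 1),
        (2 * π * a ^ 2) ^ (-(d : ℝ) / 2) *
          Real.exp (-‖pinPts x y vs ((i : ℕ) + 1) - pinPts x y vs (i : ℕ)‖ ^ 2 /
            (2 * a ^ 2))))

/-- The approximating measure
`W_{x,y,a} = (1 - e^{-m²a²/2}) Σ_{N=1}^∞ e^{-m²a²N/2} W_{x,y,a,N}`. -/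
def Wxya {d : ℕ} (x y : Ed d) (m a : ℝ) : Measure (ℝ × Omega2 x y) :=
  ENNReal.ofReal (1 - Real.exp (-m ^ 2 * a ^ 2 / 2)) •
    Measure.sum fun N : ℕ =>
      ENNReal.ofReal (Real.exp (-m ^ 2 * a ^ 2 * (N + 1) / 2)) • WxyaN x y a N

/-- The measure `V'_{x,y,a,N}` giving mass `a^{-d} (2d)^{-N}` to each
(piecewise linearly parametrized) `N`-step nearest-neighbour lattice path
in `x + aℤ^d` from `x` to `y`. -/
def VxyaN {d : ℕ} (x y : Ed d) (a : ℝ) (N : ℕ) : Measure (Omega2 x y) :=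
  Measure.sum fun s : {s : Fin N → Fin d × Bool // x + ∑ i, stepVec a (s i) = y} =>
    (ENNReal.ofReal (a ^ (-(d : ℝ))) * (((2 * d : ℕ) : ℝ≥0∞) ^ N)⁻¹) •
      Measure.dirac (pwLin2 x y N (fun i => stepVec a (s.1 i)) s.2)

/-- The approximating measure
`V'_{x,y,a} = (1 - e^{-m²a²/(2d)}) Σ_{N=1}^∞ e^{-m²a²N/(2d)} V'_{x,y,a,N}`. -/
def Vxya {d : ℕ} (x y : Ed d) (m a : ℝ) : Measure (Omega2 x y) :=
  ENNReal.ofReal (1 - Real.exp (-m ^ 2 * a ^ 2 / (2 * d))) •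
    Measure.sum fun N : ℕ =>
      ENNReal.ofReal (Real.exp (-m ^ 2 * a ^ 2 * (N + 1) / (2 * d))) • VxyaN x y a (N + 1)

/-- `Wt` is the family of pinned Wiener measures `(W_{x,y}^t)_{t>0}` on `Ω(x,y)`:
finite Borel measures characterized by the characteristic functions of their finite
dimensional distributions: for `0 = t_0 < t_1 < ⋯ < t_n < 1`, with `η_i = ξ_i + ⋯ + ξ_n`,
`∫ exp(i Σ_j ξ_j·ω(t_j)) dW_{x,y}^t = (2πt)^{-d/2} e^{-|x-y|²/(2t)} ·
exp(-(t/2)(Σ_j (t_j - t_{j-1})|η_j|² - |Σ_j t_j ξ_j|²) + i Σ_j ((1-t_j)x + t_j y)·ξ_j)`;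
in particular (`n = 0`) the total mass is the heat kernel `(2πt)^{-d/2} e^{-|x-y|²/(2t)}`. -/
def IsPinnedWienerFamily {d : ℕ} (x y : Ed d) (Wt : ℝ → Measure (Omega2 x y)) : Prop :=
  ∀ t : ℝ, 0 < t → (IsFiniteMeasure (Wt t) ∧
    ∀ (n : ℕ) (ts : ℕ → ℝ), ts 0 = 0 → (∀ i < n, ts i < ts (i + 1)) → ts n < 1 →
      ∀ ξ : Fin n → Ed d,
        (∫ ω : Omega2 x y, Complex.exp (Complex.I *
            ((∑ i : Fin n, ⟪ξ i, evalAt ω.1 (ts ((i : ℕ) + 1))⟫ : ℝ) : ℂ)) ∂(Wt t))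
          = (((2 * π * t) ^ (-(d : ℝ) / 2) * Real.exp (-‖x - y‖ ^ 2 / (2 * t)) : ℝ) : ℂ) *
            Complex.exp
              (((-(t / 2) *
                  ((∑ i : Fin n,
                      (ts ((i : ℕ) + 1) - ts (i : ℕ)) * ‖∑ j ∈ Finset.Ici i, ξ j‖ ^ 2)
                    - ‖∑ i : Fin n, ts ((i : ℕ) + 1) • ξ i‖ ^ 2) : ℝ) : ℂ)
                + Complex.I *
                  ((∑ i : Fin n,
                    ⟪ξ i, (1 - ts ((i : ℕ) + 1)) • x + ts ((i : ℕ) + 1) • y⟫ : ℝ) : ℂ)))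

open scoped BigOperators

/-! ### Uniform expectations -/

section Frequency

variable {α : Type*} [Fintype α]

/-- The proportion of the elements of a finite type lying in `s`, that is, the probability of `s`
under the uniform distribution. -/
def freq (s : Set α) : ℝ := 𝔼 a, s.indicator 1 a

lemma freq_mono {s t : Set α} (h : s ⊆ t) : freq s ≤ freq t :=
  Finset.expect_le_expect fun a _ => indicator_le_indicator_of_subset h (fun _ => zero_le_one) a

lemma freq_le_one (s : Set α) : freq s ≤ 1 := by
  cases isEmpty_or_nonempty α
  · simp [freq]
  · exact Finset.expect_le Finset.univ_nonempty fun a _ =>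
      indicator_le_self' (fun _ _ => zero_le_one) a

lemma freq_iUnion_le {κ : Type*} [Fintype κ] (s : κ → Set α) :
    freq (⋃ k, s k) ≤ ∑ k, freq (s k) := by
  classical
  simp only [freq, ← Finset.expect_sum_comm]
  refine Finset.expect_le_expect fun a _ => ?_
  have hnonneg : ∀ k ∈ Finset.univ, 0 ≤ (s k).indicator (1 : α → ℝ) a := fun k _ =>
    indicator_nonneg (fun _ _ => zero_le_one) a
  refine indicator_apply_le' (fun ha => ?_) fun _ => Finset.sum_nonneg hnonneg
  obtain ⟨k, hk⟩ := mem_iUnion.1 ha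
  calc (1 : ℝ) = (s k).indicator 1 a := by simp [hk]
    _ ≤ _ := Finset.single_le_sum hnonneg (Finset.mem_univ k)

lemma freq_union_le (s t : Set α) : freq (s ∪ t) ≤ freq s + freq t := by
  simpa [union_eq_iUnion] using freq_iUnion_le fun b : Bool => cond b s t

lemma prod_expect {ι K : Type*} [Fintype ι] [DecidableEq ι] [Field K] [CharZero K]
    (g : ι → α → K) : ∏ i, 𝔼 a, g i a = 𝔼 s : ι → α, ∏ i, g i (s i) := by
  simp only [Fintype.expect_eq_sum_div_card, Finset.prod_div_distrib, Finset.prod_univ_sum,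
    Fintype.piFinset_univ, Finset.prod_const, Finset.card_univ, Fintype.card_fun, Nat.cast_pow]

/-- Forgetting the conditioning: prescribing the sum of all the increments costs at most the largest
point probability for the sum of the increments which `E` does not observe. -/
lemma freq_sum_eq_inter_le {ι ρ κ G : Type*} [Fintype ι] [Fintype ρ] [Fintype κ] [DecidableEq ι]
    [DecidableEq ρ] [DecidableEq κ] [AddCommGroup G] (φ : α → G) (e : ι ⊕ ρ ≃ κ)
    (E : Set (ι → α)) {B : ℝ} (hB : ∀ w, freq {t : ρ → α | ∑ j, φ (t j) = w} ≤ B) (z : G) :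
    freq {s : κ → α | ∑ k, φ (s k) = z ∧ s ∘ e ∘ Sum.inl ∈ E} ≤ freq E * B := by
  have hsplit : freq {s : κ → α | ∑ k, φ (s k) = z ∧ s ∘ e ∘ Sum.inl ∈ E} =
      𝔼 u : ι → α, E.indicator 1 u * freq {t : ρ → α | ∑ j, φ (t j) = z - ∑ i, φ (u i)} := by
    simp only [freq, Finset.mul_expect]
    rw [← Finset.expect_product', Finset.univ_product_univ]
    refine Fintype.expect_equiv
      ((Equiv.arrowCongr e.symm (Equiv.refl α)).trans (Equiv.sumArrowEquivProdArrow _ _ _)) _ _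
      fun s => ?_
    have hsum : ∑ k, φ (s k) = ∑ i, φ (s (e (Sum.inl i))) + ∑ j, φ (s (e (Sum.inr j))) := by
      rw [← e.sum_comp, Fintype.sum_sum_type]
    change _ = E.indicator 1 (s ∘ e ∘ Sum.inl) *
      {t : ρ → α | ∑ j, φ (t j) = z - ∑ i, φ (s (e (Sum.inl i)))}.indicator 1 (s ∘ e ∘ Sum.inr)
    classical
    simp [indicator_apply, hsum, eq_sub_iff_add_eq', ite_and]
  rw [hsplit, freq, Finset.expect_mul]
  exact Finset.expect_le_expect fun u _ => mul_le_mul_of_nonneg_left (hB _)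
    (indicator_nonneg (fun _ _ => zero_le_one) u)

end Frequency

/-! ### The simple random walk on `ℤ^d` and its characteristic function -/

section LatticeCharacter

variable {ι : Type*} {d : ℕ}

/-- The character `v ↦ e^{i θ·v}` of `ℤ^d`. -/
def latticeChar (θ : Ed d) (v : Fin d → ℤ) : ℂ := Complex.exp (Complex.I * (∑ k, θ k * v k : ℝ))

lemma norm_latticeChar (θ : Ed d) (v : Fin d → ℤ) : ‖latticeChar θ v‖ = 1 := by
  rw [latticeChar, mul_comm, Complex.norm_exp_ofReal_mul_I]

lemma latticeChar_add (θ : Ed d) (v w : Fin d → ℤ) :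
    latticeChar θ (v + w) = latticeChar θ v * latticeChar θ w := by
  simp only [latticeChar, ← Complex.exp_add, ← mul_add, ← Complex.ofReal_add,
    ← Finset.sum_add_distrib, Pi.add_apply, Int.cast_add]

lemma latticeChar_sum [Fintype ι] (θ : Ed d) (v : ι → Fin d → ℤ) :
    latticeChar θ (∑ i, v i) = ∏ i, latticeChar θ (v i) := by
  simp only [latticeChar, ← Complex.exp_sum, Finset.sum_apply, Int.cast_sum, Finset.mul_sum]
  rw [Finset.sum_comm, Complex.ofReal_sum, Finset.mul_sum]

lemma continuous_latticeChar (v : Fin d → ℤ) : Continuous fun θ => latticeChar θ v := by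
  unfold latticeChar; fun_prop

end LatticeCharacter

section CenteredBox

variable {ι : Type*} {r : ι → ℝ}

/-- The box `∏ k, [-r k, r k]`. -/
def centeredBox (r : ι → ℝ) : Set (EuclideanSpace ℝ ι) := {θ | ∀ k, |θ k| ≤ r k}

lemma centeredBox_eq_preimage (r : ι → ℝ) :
    centeredBox r = EuclideanSpace.equiv ι ℝ ⁻¹' univ.pi fun k => Icc (-r k) (r k) := by
  ext θ
  simp only [centeredBox, abs_le, mem_ofPred_eq, mem_preimage, Set.mem_pi, mem_univ, true_imp_iff,
    Set.mem_Icc]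
  rfl

lemma isCompact_centeredBox [Finite ι] (r : ι → ℝ) : IsCompact (centeredBox r) := by
  have := Fintype.ofFinite ι
  rw [centeredBox_eq_preimage]
  exact (EuclideanSpace.equiv ι ℝ).toHomeomorph.isCompact_preimage.2
    (isCompact_univ_pi fun _ => isCompact_Icc)

lemma measurableSet_centeredBox [Finite ι] (r : ι → ℝ) : MeasurableSet (centeredBox r) :=
  (isCompact_centeredBox r).isClosed.measurableSet

lemma setIntegral_centeredBox_prod [Fintype ι] (r : ι → ℝ) (f : ι → ℝ → ℂ) :
    ∫ θ in centeredBox r, ∏ k, f k (θ k) = ∏ k, ∫ t in Icc (-r k) (r k), f k t := by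
  rw [centeredBox_eq_preimage, ← integral_fintype_prod_eq_prod (𝕜 := ℂ) f, ← Measure.restrict_pi_pi,
    ← volume_pi]
  exact (PiLp.volume_preserving_ofLp ι).setIntegral_preimage_emb
    (MeasurableEquiv.toLp 2 _).symm.measurableEmbedding (fun x => ∏ k, f k (x k)) _

lemma integral_Icc_neg_cexp_mul {b c : ℝ} (hb : 0 ≤ b) (hc : c ≠ 0) :
    ∫ t in Icc (-b) b, Complex.exp (Complex.I * (t * c : ℝ)) =
      ((2 * Real.sin (c * b) / c : ℝ) : ℂ) := by
  rw [integral_Icc_eq_integral_Ioc, ← intervalIntegral.integral_of_le (by linarith)]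
  have hIc : Complex.I * (c : ℂ) ≠ 0 := by simp [hc]
  have hcomm : ∀ t : ℝ, Complex.I * (t * c : ℝ) = Complex.I * c * t := fun t => by push_cast; ring
  simp only [hcomm]
  rw [integral_exp_mul_complex hIc]
  push_cast
  rw [Complex.two_sin]
  field_simp
  ring_nf
  simp
  ring

end CenteredBox

section HalfZone

variable {d : ℕ} [NeZero d]

/-- One half of the Brillouin zone `[-π, π]^d`. The steps of the simple random walk change the
parity of the coordinate sum, so its characteristic function is, up to a sign, invariant under
translation by `(π, …, π)`, and the half zone retains all the information. It has the advantage that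
the characteristic function has modulus one at the origin only. -/
def halfZone (d : ℕ) [NeZero d] : Set (Ed d) :=
  centeredBox (Function.update (fun _ => π) 0 (π / 2))

lemma prod_length_halfZone :
    ∏ k : Fin d, 2 * Function.update (fun _ : Fin d => π) 0 (π / 2) k = (2 * π) ^ d / 2 := by
  rw [Finset.prod_mul_distrib, Finset.prod_update_of_mem (Finset.mem_univ _)]
  simp only [Finset.prod_const, Finset.card_univ, Fintype.card_fin,
    Finset.card_sdiff_of_subset (Finset.subset_univ _), Finset.card_singleton]
  rw [mul_pow, ← mul_pow_sub_one (NeZero.ne d) π]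
  ring

lemma setIntegral_halfZone_latticeChar {v : Fin d → ℤ} (hv : Even (∑ k, v k)) :
    ∫ θ in halfZone d, latticeChar θ v = if v = 0 then (((2 * π) ^ d / 2 : ℝ) : ℂ) else 0 := by
  have hpos : ∀ k : Fin d, 0 ≤ Function.update (fun _ : Fin d => π) 0 (π / 2) k := fun k => by
    rw [Function.update_apply]; split_ifs <;> positivity
  simp only [latticeChar, Complex.ofReal_sum, Finset.mul_sum, Complex.exp_sum]
  rw [halfZone, setIntegral_centeredBox_prod _ fun k t => Complex.exp (Complex.I * (t * v k : ℝ))]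
  split_ifs with h
  · simp only [h, Pi.zero_apply, Int.cast_zero, mul_zero, Complex.ofReal_zero, Complex.exp_zero,
      integral_const, measureReal_restrict_apply_univ, Real.volume_real_Icc, sub_neg_eq_add,
      ← two_mul, max_eq_left (mul_nonneg zero_le_two (hpos _)), Complex.real_smul, mul_one,
      ← Complex.ofReal_prod, prod_length_halfZone]
  obtain ⟨k, hvk, hsin⟩ : ∃ k, v k ≠ 0 ∧
      Real.sin (v k * Function.update (fun _ : Fin d => π) 0 (π / 2) k) = 0 := by
    by_cases hex : ∃ k ≠ 0, v k ≠ 0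
    · obtain ⟨k, hk, hvk⟩ := hex
      exact ⟨k, hvk, by rw [Function.update_of_ne hk, Real.sin_int_mul_pi]⟩
    · push Not at hex
      have hsum : ∑ k, v k = v 0 := Finset.sum_eq_single _ (fun k _ hk => hex k hk) (by simp)
      obtain ⟨n, hn⟩ := hsum ▸ hv
      refine ⟨0, fun h0 => h (funext fun k => ?_), ?_⟩
      · by_cases hk : k = 0
        exacts [hk ▸ h0, hex k hk]
      · rw [Function.update_self, hn, ← Real.sin_int_mul_pi n]
        push_cast
        ring_nf
  refine Finset.prod_eq_zero (Finset.mem_univ k) ?_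
  rw [integral_Icc_neg_cexp_mul (hpos k) (Int.cast_ne_zero.2 hvk), hsin]
  simp

end HalfZone

section RandomWalk

variable {d : ℕ} {ι : Type*} [Fintype ι] [DecidableEq ι]

/-- The step of the simple random walk on `ℤ^d` in direction `p.1`, forwards or backwards according
to `p.2`. -/
def latStep (p : Fin d × Bool) : Fin d → ℤ := Pi.single p.1 (if p.2 then 1 else -1)

/-- The probability that the simple random walk on `ℤ^d` with steps indexed by `ι` ends at `z`. -/
def walkProb (ι : Type*) [Fintype ι] [DecidableEq ι] (z : Fin d → ℤ) : ℝ :=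
  freq {s : ι → Fin d × Bool | ∑ i, latStep (s i) = z}

/-- The characteristic function of a step of the simple random walk on `ℤ^d`. -/
def meanCos (u : Ed d) : ℝ := 𝔼 k, Real.cos (u k)

omit [DecidableEq ι] in
lemma even_card_sub_sum_latStep (s : ι → Fin d × Bool) :
    Even ((Fintype.card ι : ℤ) - ∑ k, (∑ i, latStep (s i)) k) := by
  have hstep : ∀ p : Fin d × Bool, Even (1 - ∑ k, latStep p k) := fun p => by
    rcases p with ⟨k, _ | _⟩ <;> simp [latStep]
  have hcard : (Fintype.card ι : ℤ) = ∑ _i : ι, 1 := by simp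
  simp only [Finset.sum_apply]
  rw [Finset.sum_comm, hcard, ← Finset.sum_sub_distrib]
  exact Finset.even_sum _ fun i _ => hstep _

lemma walkProb_eq_zero_of_odd {z : Fin d → ℤ} (hz : ¬Even ((Fintype.card ι : ℤ) - ∑ k, z k)) :
    walkProb ι z = 0 := by
  have hempty : {s : ι → Fin d × Bool | ∑ i, latStep (s i) = z} = ∅ :=
    eq_empty_of_forall_notMem fun s hs => hz (hs ▸ even_card_sub_sum_latStep s)
  simp [walkProb, hempty, freq]

lemma expect_sum_latStep_eq_setIntegral_halfZone [NeZero d] (g : ι → Fin d × Bool → ℂ)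
    {z : Fin d → ℤ} (hz : Even ((Fintype.card ι : ℤ) - ∑ k, z k)) :
    𝔼 s : ι → Fin d × Bool, {s | ∑ i, latStep (s i) = z}.indicator (fun s => ∏ i, g i (s i)) s =
      ((2 / (2 * π) ^ d : ℝ) : ℂ) * ∫ θ in halfZone d,
        latticeChar θ (-z) * ∏ i, 𝔼 p, g i p * latticeChar θ (latStep p) := by
  have hexpand : ∀ θ : Ed d,
      latticeChar θ (-z) * ∏ i, 𝔼 p, g i p * latticeChar θ (latStep p) =
        𝔼 s : ι → Fin d × Bool,
          (∏ i, g i (s i)) * latticeChar θ (∑ i, latStep (s i) - z) := fun θ => by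
    rw [prod_expect, Finset.mul_expect]
    refine Finset.expect_congr rfl fun s _ => ?_
    rw [Finset.prod_mul_distrib, sub_eq_add_neg, latticeChar_add, latticeChar_sum]
    ring
  have horth : ∀ s : ι → Fin d × Bool,
      {s | ∑ i, latStep (s i) = z}.indicator (fun s => ∏ i, g i (s i)) s =
        ((2 / (2 * π) ^ d : ℝ) : ℂ) * ∫ θ in halfZone d,
          (∏ i, g i (s i)) * latticeChar θ (∑ i, latStep (s i) - z) := fun s => by
    have hparity : Even (∑ k, (∑ i, latStep (s i) - z) k) := by
      simpa [Finset.sum_sub_distrib] using hz.sub (even_card_sub_sum_latStep s)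
    rw [integral_const_mul, setIntegral_halfZone_latticeChar hparity, mul_left_comm]
    by_cases h : ∑ i, latStep (s i) = z <;> simp [h, sub_eq_zero]
  simp_rw [hexpand, horth]
  simp only [Fintype.expect_eq_sum_div_card, integral_div, ← Finset.mul_sum, mul_div_assoc]
  rw [integral_finsetSum _ fun s _ => ?_]
  exact (continuous_const.mul (continuous_latticeChar _)).continuousOn.integrableOn_compact
    (isCompact_centeredBox _)

lemma expect_cexp_inner_stepVec_mul_latticeChar (θ c : Ed d) (a : ℝ) :
    𝔼 p : Fin d × Bool, Complex.exp (Complex.I * (⟪c, stepVec a p⟫ : ℝ)) *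
      latticeChar θ (latStep p) = (meanCos (θ + a • c) : ℝ) := by
  have hstep : ∀ k (b : Bool), Complex.exp (Complex.I * (⟪c, stepVec a (k, b)⟫ : ℝ)) *
      latticeChar θ (latStep (k, b)) =
        Complex.exp ((if b then 1 else -1) * ((θ k + a * c k : ℝ) : ℂ) * Complex.I) := by
    intro k b
    have hchar : ∑ j, θ j * (latStep (k, b) j : ℤ) = θ k * (if b then 1 else -1) := by
      rw [Finset.sum_eq_single k (fun j _ hj => by simp [latStep, hj]) (by simp)]
      cases b <;> simp [latStep]
    rw [latticeChar, hchar, ← Complex.exp_add, stepVec, inner_smul_right,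
      EuclideanSpace.inner_single_right]
    cases b <;> simp <;> ring_nf
  rw [← Finset.univ_product_univ, Finset.expect_product, meanCos, Complex.ofReal_expect]
  refine Finset.expect_congr rfl fun k _ => ?_
  simp only [hstep, Fintype.expect_eq_sum_div_card, Fintype.sum_bool, Complex.ofReal_cos,
    Complex.cos]
  simp

end RandomWalk

/-! ### Local limit bounds -/

section CosineDecay

variable {d : ℕ}

lemma mul_sq_le_one_sub_cos {u : ℝ} (hu : |u| ≤ 3 * π / 2) :
    4 / (9 * π ^ 2) * u ^ 2 ≤ 1 - Real.cos u := by
  have hpi := Real.pi_pos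
  rcases le_total |u| π with h | h
  · have hjordan := Real.cos_le_one_sub_mul_cos_sq h
    have hconst : 4 / (9 * π ^ 2) ≤ 2 / π ^ 2 := by
      rw [div_le_div_iff₀ (by positivity) (by positivity)]
      nlinarith [sq_nonneg π]
    linarith [mul_le_mul_of_nonneg_right hconst (sq_nonneg u)]
  · have hcos : Real.cos u ≤ 0 := by
      rw [← Real.cos_abs]
      exact Real.cos_nonpos_of_pi_div_two_le_of_le (by linarith) (by linarith)
    have hsq : 4 / (9 * π ^ 2) * u ^ 2 ≤ 1 :=
      calc 4 / (9 * π ^ 2) * u ^ 2 ≤ 4 / (9 * π ^ 2) * (3 * π / 2) ^ 2 := by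
            rw [← sq_abs u]; gcongr
        _ = 1 := by field_simp; norm_num
    linarith

lemma abs_meanCos_le_one (u : Ed d) : |meanCos u| ≤ 1 := by
  rcases isEmpty_or_nonempty (Fin d) with h | h
  · simp [meanCos]
  · exact (Finset.abs_expect_le _ _).trans
      (Finset.expect_le Finset.univ_nonempty fun k _ => Real.abs_cos_le_one _)

/-- A neighbourhood of the half zone which is still small enough to contain no further point where
`meanCos` has modulus one. -/
def wideZone (d : ℕ) [NeZero d] : Set (Ed d) :=
  centeredBox (Function.update (fun _ => 3 * π / 2) 0 (2 * π / 3))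

/-- The Gaussian decay rate of `meanCos` on the wide zone. -/
def cosRate (d : ℕ) : ℝ := 2 / (9 * π ^ 2 * d ^ 2)

variable [NeZero d] {u : Ed d}

lemma cosRate_pos : 0 < cosRate d := by
  have := NeZero.pos d
  unfold cosRate
  positivity

lemma abs_apply_zero_le_of_mem_wideZone (hu : u ∈ wideZone d) : |u 0| ≤ 2 * π / 3 := by
  simpa only [Function.update_self] using hu 0

lemma abs_apply_le_of_mem_wideZone (hu : u ∈ wideZone d) (k : Fin d) : |u k| ≤ 3 * π / 2 := by
  have hpi := Real.pi_pos
  have h := hu k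
  rw [Function.update_apply] at h
  split_ifs at h <;> linarith

lemma add_mem_wideZone {θ : Ed d} (hθ : θ ∈ halfZone d) (hu : ‖u‖ ≤ π / 6) : θ + u ∈ wideZone d :=
  fun k => by
    have hpi := Real.pi_pos
    have hsum : |(θ + u) k| ≤ |θ k| + π / 6 :=
      (abs_add_le _ _).trans (add_le_add le_rfl (by simpa using (PiLp.norm_apply_le u k).trans hu))
    have h := hθ k
    rw [Function.update_apply] at h ⊢
    split_ifs at h ⊢ <;> linarith

lemma halfZone_subset_wideZone : halfZone d ⊆ wideZone d := fun θ hθ => by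
  simpa using add_mem_wideZone (u := 0) hθ (by rw [norm_zero]; positivity)

lemma cosRate_mul_norm_sq_le (hu : u ∈ wideZone d) : cosRate d * ‖u‖ ^ 2 ≤ 1 / (2 * d) := by
  have hd : (0 : ℝ) < d := Nat.cast_pos.2 (NeZero.pos d)
  have hnorm : ‖u‖ ^ 2 ≤ d * (3 * π / 2) ^ 2 := by
    rw [EuclideanSpace.real_norm_sq_eq]
    refine (Finset.sum_le_card_nsmul _ _ ((3 * π / 2) ^ 2) fun k _ => ?_).trans_eq (by simp)
    rw [← sq_abs]
    gcongr
    exact abs_apply_le_of_mem_wideZone hu k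
  calc cosRate d * ‖u‖ ^ 2 ≤ cosRate d * (d * (3 * π / 2) ^ 2) := by
        gcongr; exact cosRate_pos.le
    _ = 1 / (2 * (d : ℝ)) := by rw [cosRate]; field_simp; norm_num

lemma meanCos_le_one_sub (hu : u ∈ wideZone d) : meanCos u ≤ 1 - cosRate d * ‖u‖ ^ 2 := by
  have hd : (1 : ℝ) ≤ d := Nat.one_le_cast.2 (NeZero.one_le)
  have hrate : cosRate d * ‖u‖ ^ 2 ≤ 4 / (9 * π ^ 2) * (‖u‖ ^ 2 / d) := by
    rw [cosRate, ← mul_div_assoc, div_mul_eq_mul_div, div_mul_eq_mul_div, div_div,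
      div_le_div_iff₀ (by positivity) (by positivity)]
    nlinarith [mul_nonneg (mul_nonneg (sq_nonneg π) (sq_nonneg ‖u‖))
      (by nlinarith : 0 ≤ 2 * (d : ℝ) ^ 2 - d)]
  have hmean : 𝔼 k, 4 / (9 * π ^ 2) * u k ^ 2 ≤ 𝔼 k, (1 - Real.cos (u k)) :=
    Finset.expect_le_expect fun k _ => mul_sq_le_one_sub_cos (abs_apply_le_of_mem_wideZone hu k)
  rw [← Finset.mul_expect, Fintype.expect_eq_sum_div_card (fun k => u k ^ 2),
    ← EuclideanSpace.real_norm_sq_eq, Fintype.card_fin, Finset.expect_sub_distrib,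
    Finset.expect_const Finset.univ_nonempty] at hmean
  rw [meanCos]
  linarith

lemma neg_one_add_le_meanCos (hu : u ∈ wideZone d) : -1 + 1 / (2 * d) ≤ meanCos u := by
  have hzero : -1 / 2 ≤ Real.cos (u 0) := by
    rw [← Real.cos_abs, (by rw [Real.cos_pi_sub, Real.cos_pi_div_three]; ring :
      (-1 / 2 : ℝ) = Real.cos (π - π / 3))]
    exact Real.cos_le_cos_of_nonneg_of_le_pi (abs_nonneg _) (by linarith [Real.pi_pos])
      (by linarith [abs_apply_zero_le_of_mem_wideZone hu])
  have hmean : 𝔼 k : Fin d, (-1 + if k = 0 then 1 / 2 else 0 : ℝ) ≤ meanCos u := by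
    refine Finset.expect_le_expect fun k _ => ?_
    split_ifs with h
    · rw [h]; linarith
    · linarith [Real.neg_one_le_cos (u k)]
  refine le_of_eq_of_le ?_ hmean
  rw [Finset.expect_add_distrib, Finset.expect_const Finset.univ_nonempty,
    Fintype.expect_eq_sum_div_card, Finset.sum_ite_eq', if_pos (Finset.mem_univ _),
    Fintype.card_fin, div_div]

lemma abs_meanCos_le (hu : u ∈ wideZone d) : |meanCos u| ≤ Real.exp (-(cosRate d * ‖u‖ ^ 2)) := by
  have habs : |meanCos u| ≤ 1 - cosRate d * ‖u‖ ^ 2 :=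
    abs_le.2 ⟨by linarith [cosRate_mul_norm_sq_le hu, neg_one_add_le_meanCos hu],
      meanCos_le_one_sub hu⟩
  linarith [Real.add_one_le_exp (-(cosRate d * ‖u‖ ^ 2))]

end CosineDecay

section LocalLimit

variable {d : ℕ}

lemma integrable_exp_neg_mul_norm_sq {V : Type*} [NormedAddCommGroup V] [InnerProductSpace ℝ V]
    [FiniteDimensional ℝ V] [MeasurableSpace V] [BorelSpace V] {b : ℝ} (hb : 0 < b) :
    Integrable fun v : V => Real.exp (-b * ‖v‖ ^ 2) := by
  refine (GaussianFourier.integrable_cexp_neg_mul_sq_norm_add (V := V) (b := b)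
    (by simpa using hb) 0 0).norm.congr (Eventually.of_forall fun v => ?_)
  simp [Complex.norm_exp, ← Complex.ofReal_pow]

variable [NeZero d] {ι : Type*} [Fintype ι] [DecidableEq ι]

lemma walkProb_eq_integral {z : Fin d → ℤ} (hz : Even ((Fintype.card ι : ℤ) - ∑ k, z k)) :
    (walkProb ι z : ℂ) = ((2 / (2 * π) ^ d : ℝ) : ℂ) * ∫ θ in halfZone d,
      latticeChar θ (-z) * (meanCos θ : ℂ) ^ Fintype.card ι := by
  have hstep : ∀ θ : Ed d, 𝔼 p : Fin d × Bool, latticeChar θ (latStep p) = (meanCos θ : ℂ) :=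
    fun θ => by simpa using expect_cexp_inner_stepVec_mul_latticeChar θ 0 0
  have hinv := expect_sum_latStep_eq_setIntegral_halfZone (fun (_ : ι) _ => 1) hz
  simp only [one_mul, hstep, Finset.prod_const, Finset.card_univ] at hinv
  rw [← hinv, walkProb, freq, Complex.ofReal_expect]
  refine Finset.expect_congr rfl fun s _ => ?_
  simp only [indicator_apply, one_pow, Pi.one_apply]
  split_ifs <;> simp

lemma norm_integral_halfZone_le (z : Fin d → ℤ) (n : ℕ) :
    ‖∫ θ in halfZone d, latticeChar θ (-z) * (meanCos θ : ℂ) ^ n‖ ≤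
      Real.exp 1 * (π / (cosRate d * (n + 1))) ^ ((d : ℝ) / 2) := by
  have hκ : 0 < cosRate d * (n + 1) := mul_pos cosRate_pos (by positivity)
  have hint : Integrable fun θ : Ed d =>
      Real.exp 1 * Real.exp (-(cosRate d * (n + 1)) * ‖θ‖ ^ 2) :=
    (integrable_exp_neg_mul_norm_sq hκ).const_mul _
  calc _ ≤ ∫ θ in halfZone d, Real.exp 1 * Real.exp (-(cosRate d * (n + 1)) * ‖θ‖ ^ 2) := by
        refine norm_integral_le_of_norm_le hint.integrableOn
          (ae_restrict_of_forall_mem (measurableSet_centeredBox _) fun θ hθ => ?_)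
        have hwide : θ ∈ wideZone d := halfZone_subset_wideZone hθ
        have hsmall : cosRate d * ‖θ‖ ^ 2 ≤ 1 := (cosRate_mul_norm_sq_le hwide).trans <|
          div_le_one_of_le₀ (by linarith [Nat.one_le_cast (α := ℝ).2 (NeZero.one_le (n := d))])
            (by positivity)
        rw [norm_mul, norm_latticeChar, one_mul, norm_pow, Complex.norm_real, Real.norm_eq_abs]
        calc |meanCos θ| ^ n ≤ Real.exp (-(cosRate d * ‖θ‖ ^ 2)) ^ n := by
              gcongr; exact abs_meanCos_le hwide
          _ ≤ Real.exp 1 * Real.exp (-(cosRate d * (n + 1)) * ‖θ‖ ^ 2) := by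
              rw [← Real.exp_nat_mul, ← Real.exp_add, Real.exp_le_exp]
              linarith
    _ ≤ ∫ θ : Ed d, Real.exp 1 * Real.exp (-(cosRate d * (n + 1)) * ‖θ‖ ^ 2) :=
        setIntegral_le_integral hint (Eventually.of_forall fun θ => by positivity)
    _ = _ := by
        rw [integral_const_mul, GaussianFourier.integral_rexp_neg_mul_sq_norm hκ,
          finrank_euclideanSpace_fin]

/-- The constant in the local limit upper bound for the simple random walk. -/
def localLimitConst (d : ℕ) : ℝ :=
  2 / (2 * π) ^ d * (Real.exp 1 * (π / cosRate d) ^ ((d : ℝ) / 2))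

omit [NeZero d] in
lemma localLimitConst_nonneg : 0 ≤ localLimitConst d := by
  have : 0 ≤ cosRate d := by unfold cosRate; positivity
  unfold localLimitConst
  positivity

lemma walkProb_le (z : Fin d → ℤ) :
    walkProb ι z ≤ localLimitConst d * ((Fintype.card ι : ℝ) + 1) ^ (-(d : ℝ) / 2) := by
  by_cases hz : Even ((Fintype.card ι : ℤ) - ∑ k, z k)
  · have hκ := cosRate_pos (d := d)
    calc walkProb ι z ≤ ‖(walkProb ι z : ℂ)‖ :=
          (le_abs_self _).trans_eq (Complex.norm_real _).symm
      _ ≤ 2 / (2 * π) ^ d * (Real.exp 1 *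
            (π / (cosRate d * (Fintype.card ι + 1))) ^ ((d : ℝ) / 2)) := by
          rw [walkProb_eq_integral hz, norm_mul, Complex.norm_real,
            Real.norm_of_nonneg (by positivity)]
          gcongr
          exact norm_integral_halfZone_le z _
      _ = _ := by
          rw [← div_div, Real.div_rpow (by positivity) (by positivity), neg_div,
            Real.rpow_neg (by positivity), localLimitConst]
          ring
  · rw [walkProb_eq_zero_of_odd hz]
    exact mul_nonneg localLimitConst_nonneg (by positivity)


lemma freq_sum_latStep_eq_inter_le {M N : ℕ} {g : Fin M → Fin N} (hg : Function.Injective g)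
    (E : Set (Fin M → Fin d × Bool)) (z : Fin d → ℤ) :
    freq {s : Fin N → Fin d × Bool | ∑ i, latStep (s i) = z ∧ s ∘ g ∈ E} ≤
      freq E * (localLimitConst d * (((N - M : ℕ) : ℝ) + 1) ^ (-(d : ℝ) / 2)) := by
  classical
  let e : Fin M ⊕ ↥(Set.range g)ᶜ ≃ Fin N :=
    ((Equiv.ofInjective g hg).sumCongr (Equiv.refl _)).trans (Equiv.Set.sumCompl (Set.range g))
  have hcard : Fintype.card ↥(Set.range g)ᶜ = N - M := by
    have := Fintype.card_congr e
    rw [Fintype.card_sum, Fintype.card_fin, Fintype.card_fin] at this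
    omega
  refine freq_sum_eq_inter_le latStep e E (fun w => ?_) z
  rw [← hcard]
  exact walkProb_le w

end LocalLimit

/-! ### Large excursions of the walk -/

section PrefixSum

variable {M : ℕ} {E : Type*} [AddCommMonoid E]

/-- The sum of the first `n` entries of the vector `v`, or of all entries if there are fewer. -/
def prefixSum (v : Fin M → E) (n : ℕ) : E := ∑ i : Fin M, if (i : ℕ) < n then v i else 0

lemma prefixSum_zero (v : Fin M → E) : prefixSum v 0 = 0 := by
  simp [prefixSum]

lemma prefixSum_length (v : Fin M → E) : prefixSum v M = ∑ i, v i := by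
  simp [prefixSum]

lemma prefixSum_succ (v : Fin (M + 1) → E) (n : ℕ) :
    prefixSum v (n + 1) = v 0 + prefixSum (fun i => v i.succ) n := by
  simp [prefixSum, Fin.sum_univ_succ]

lemma prefixSum_add_one {v : Fin M → E} {n : ℕ} (hn : n < M) :
    prefixSum v (n + 1) = prefixSum v n + v ⟨n, hn⟩ := by
  have hsplit : ∀ i : Fin M, (if (i : ℕ) < n + 1 then v i else 0) =
      (if (i : ℕ) < n then v i else 0) + if i = ⟨n, hn⟩ then v i else 0 := fun i => by
    simp only [Fin.ext_iff]
    split_ifs <;> first | omega | simp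
  simp only [prefixSum, hsplit, Finset.sum_add_distrib, Finset.sum_ite_eq', Finset.mem_univ,
    if_true]

lemma prefixSum_eq_add_prefixSum (v : Fin M → E) {lo hi n : ℕ} (hM : hi ≤ M) (hlo : lo ≤ n)
    (hhi : n ≤ hi) : prefixSum v n = prefixSum v lo +
      prefixSum (fun l : Fin (hi - lo) => v ⟨lo + l, by omega⟩) (n - lo) := by
  induction n, hlo using Nat.le_induction with
  | base => rw [Nat.sub_self, prefixSum_zero, add_zero]
  | succ n hn ih =>
    rw [prefixSum_add_one (by omega), ih (by omega), Nat.sub_add_comm hn,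
      prefixSum_add_one (by omega), add_assoc]
    simp only [Nat.add_sub_cancel' hn]

lemma prefixSum_sub {F : Type*} [AddCommGroup F] (f : ℕ → F) {n : ℕ} (hn : n ≤ M) :
    prefixSum (fun i : Fin M => f (i + 1) - f i) n = f n - f 0 := by
  induction n with
  | zero => rw [prefixSum_zero, sub_self]
  | succ n ih => rw [prefixSum_add_one (by omega), ih (by omega)]; abel

lemma map_prefixSum {F G : Type*} [AddCommMonoid F] [FunLike G E F] [AddMonoidHomClass G E F]
    (φ : G) (v : Fin M → E) (n : ℕ) : φ (prefixSum v n) = prefixSum (fun i => φ (v i)) n := by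
  simp only [prefixSum, map_sum, apply_ite φ, map_zero]

end PrefixSum

section MaximalInequality

variable {α : Type*} [Fintype α]

lemma freq_fin_succ {M : ℕ} (s : Set (Fin (M + 1) → α)) :
    freq s = 𝔼 a, freq {u : Fin M → α | Fin.cons a u ∈ s} := by
  simp only [freq]
  rw [← Finset.expect_product', Finset.univ_product_univ]
  exact (Fintype.expect_equiv (Fin.consEquiv fun _ => α) _ _ fun _ => rfl).symm

/-- The exponential martingale argument, as an induction on the number of steps which conditions on
the first step. -/
lemma freq_exists_le_prefixSum_le (h : α → ℝ) {l : ℝ} (hl : 0 ≤ l)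
    (hexp : 1 ≤ 𝔼 a, Real.exp (l * h a)) (M : ℕ) (R : ℝ) :
    freq {u : Fin M → α | ∃ n ≤ M, R ≤ prefixSum (fun i => h (u i)) n} ≤
      Real.exp (-(l * R)) * (𝔼 a, Real.exp (l * h a)) ^ M := by
  have htrivial : ∀ (M : ℕ) (R : ℝ) (s : Set (Fin M → α)), R ≤ 0 →
      freq s ≤ Real.exp (-(l * R)) * (𝔼 a, Real.exp (l * h a)) ^ M := fun M R s hR =>
    (freq_le_one _).trans <| one_le_mul_of_one_le_of_one_le
      (Real.one_le_exp (neg_nonneg.2 (mul_nonpos_of_nonneg_of_nonpos hl hR))) (one_le_pow₀ hexp)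
  induction M generalizing R with
  | zero =>
    rcases le_or_gt R 0 with hR | hR
    · exact htrivial 0 R _ hR
    · have hempty : {u : Fin 0 → α | ∃ n ≤ 0, R ≤ prefixSum (fun i => h (u i)) n} = ∅ :=
        eq_empty_of_forall_notMem fun u ⟨n, _, hn⟩ => hR.not_ge (by simpa [prefixSum] using hn)
      rw [hempty, freq]
      simpa using (Real.exp_pos _).le
  | succ M ih =>
    rcases le_or_gt R 0 with hR | hR
    · exact htrivial (M + 1) R _ hR
    have hfirst : ∀ a : α, {u : Fin M → α | Fin.cons a u ∈ {u : Fin (M + 1) → α |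
        ∃ n ≤ M + 1, R ≤ prefixSum (fun i => h (u i)) n}} ⊆
          {u | ∃ n ≤ M, R - h a ≤ prefixSum (fun i => h (u i)) n} := by
      rintro a u ⟨_ | n, hn, hs⟩
      · rw [prefixSum_zero] at hs
        exact absurd hs hR.not_ge
      · simp only [prefixSum_succ, Fin.cons_zero, Fin.cons_succ] at hs
        exact ⟨n, by omega, by linarith⟩
    calc _ ≤ 𝔼 a, Real.exp (-(l * (R - h a))) * (𝔼 a, Real.exp (l * h a)) ^ M := by
          rw [freq_fin_succ]
          exact Finset.expect_le_expect fun a _ => (freq_mono (hfirst a)).trans (ih _)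
      _ = _ := by
          rw [← Finset.expect_mul, pow_succ', ← mul_assoc, Finset.mul_expect]
          congr 1
          refine Finset.expect_congr rfl fun a _ => ?_
          rw [← Real.exp_add]
          ring_nf

end MaximalInequality

section LargeExcursion

variable {d : ℕ}

lemma expect_exp_mul_latStep [NeZero d] (l : ℝ) (c : Fin d) :
    𝔼 p : Fin d × Bool, Real.exp (l * latStep p c) = 1 + (Real.cosh l - 1) / d := by
  have hstep : ∀ k : Fin d, 𝔼 b : Bool, Real.exp (l * latStep (k, b) c) =
      1 + if k = c then Real.cosh l - 1 else 0 := fun k => by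
    rw [Fintype.expect_eq_sum_div_card, Fintype.sum_bool]
    split_ifs with h
    · simp [latStep, h, Real.cosh_eq]
    · simp [latStep, Ne.symm h]
  rw [← Finset.univ_product_univ, Finset.expect_product]
  simp only [hstep, Finset.expect_add_distrib, Finset.expect_const Finset.univ_nonempty]
  simp [NNRat.smul_def, inv_mul_eq_div]

/-- The event that a coordinate of a walk with `M` steps has size at least `R` at some time. -/
def largeExcursion (d M : ℕ) (R : ℝ) : Set (Fin M → Fin d × Bool) :=
  {u | ∃ n ≤ M, ∃ c, R ≤ |(prefixSum (fun i => latStep (u i)) n c : ℝ)|}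

lemma freq_exists_le_signed_prefixSum_le [NeZero d] {M : ℕ} {R L : ℝ} (hR : 0 ≤ R) (hL : 0 < L)
    (hML : M ≤ L) (c : Fin d) {ε : ℝ} (hε : ε = 1 ∨ ε = -1) :
    freq {u : Fin M → Fin d × Bool | ∃ n ≤ M,
      R ≤ prefixSum (fun i => ε * latStep (u i) c) n} ≤ Real.exp (-(R ^ 2 / (2 * L))) := by
  have hd : (1 : ℝ) ≤ d := Nat.one_le_cast.2 NeZero.one_le
  -- `R / L` minimises the resulting bound `exp (-l R + L l² / 2)` over `l`.
  set l := R / L with hl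
  have hmgf : 𝔼 p : Fin d × Bool, Real.exp (l * (ε * latStep p c)) =
      1 + (Real.cosh l - 1) / d := by
    simp only [← mul_assoc, expect_exp_mul_latStep]
    rcases hε with rfl | rfl <;> simp
  have hcosh : 0 ≤ Real.cosh l - 1 := sub_nonneg.2 (Real.one_le_cosh l)
  have hmgf_le : 1 + (Real.cosh l - 1) / d ≤ Real.exp (l ^ 2 / 2) := by
    linarith [div_le_self hcosh hd, Real.cosh_le_exp_half_sq l]
  calc _ ≤ Real.exp (-(l * R)) * (1 + (Real.cosh l - 1) / d) ^ M := by
        rw [← hmgf]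
        refine freq_exists_le_prefixSum_le (fun p => ε * latStep p c) (by positivity) ?_ M R
        rw [hmgf]
        linarith [div_nonneg hcosh (zero_le_one.trans hd)]
    _ ≤ Real.exp (-(l * R)) * Real.exp (l ^ 2 / 2) ^ M := by gcongr
    _ ≤ Real.exp (-(R ^ 2 / (2 * L))) := by
        rw [← Real.exp_nat_mul, ← Real.exp_add, Real.exp_le_exp]
        calc -(l * R) + M * (l ^ 2 / 2) ≤ -(l * R) + L * (l ^ 2 / 2) := by gcongr
          _ = -(R ^ 2 / (2 * L)) := by rw [hl]; field_simp; ring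

lemma freq_largeExcursion_le [NeZero d] {M : ℕ} {R L : ℝ} (hR : 0 ≤ R) (hL : 0 < L)
    (hML : M ≤ L) : freq (largeExcursion d M R) ≤ 2 * d * Real.exp (-(R ^ 2 / (2 * L))) := by
  have hcover : largeExcursion d M R ⊆ ⋃ q : Fin d × Bool, {u | ∃ n ≤ M,
      R ≤ prefixSum (fun i => (if q.2 then 1 else -1) * (latStep (u i) q.1 : ℝ)) n} := by
    rintro u ⟨n, hn, c, hc⟩
    have hcoord : ∀ ε : ℝ, ε * (prefixSum (fun i => latStep (u i)) n c : ℝ) =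
        prefixSum (fun i => ε * (latStep (u i) c : ℝ)) n := fun ε =>
      map_prefixSum ((AddMonoidHom.mulLeft ε).comp
        ((Int.castAddHom ℝ).comp (Pi.evalAddMonoidHom (fun _ : Fin d => ℤ) c)))
        (fun i => latStep (u i)) n
    rcases le_abs.1 hc with h | h
    · exact mem_iUnion.2
        ⟨(c, true), n, hn, (h.trans_eq (one_mul _).symm).trans_eq (hcoord 1)⟩
    · exact mem_iUnion.2
        ⟨(c, false), n, hn, (h.trans_eq (neg_one_mul _).symm).trans_eq (hcoord (-1))⟩
  calc _ ≤ ∑ q : Fin d × Bool, freq {u : Fin M → Fin d × Bool | ∃ n ≤ M,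
          R ≤ prefixSum (fun i => (if q.2 then 1 else -1) * (latStep (u i) q.1 : ℝ)) n} :=
        (freq_mono hcover).trans (freq_iUnion_le _)
    _ ≤ ∑ _q : Fin d × Bool, Real.exp (-(R ^ 2 / (2 * L))) :=
        Finset.sum_le_sum fun q _ => freq_exists_le_signed_prefixSum_le hR hL hML q.1
          (by split_ifs <;> simp)
    _ = _ := by simp; ring

end LargeExcursion

section OffDiagonal

variable {d : ℕ}

lemma rpow_neg_half_mul_exp_neg_le (d : ℕ) {c τ : ℝ} (hc : 0 < c) (hτ : 0 < τ) :
    τ ^ (-(d : ℝ) / 2) * Real.exp (-(c / τ)) ≤ 1 + d.factorial / c ^ d := by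
  have hrpow : τ ^ (-(d : ℝ) / 2) ≤ 1 + τ⁻¹ ^ d := by
    rw [neg_div, Real.rpow_neg hτ.le, ← Real.inv_rpow hτ.le]
    rcases le_total τ⁻¹ 1 with h | h
    · exact (Real.rpow_le_one (by positivity) h (by positivity)).trans
        (le_add_of_nonneg_right (by positivity))
    · refine le_add_of_nonneg_of_le zero_le_one ?_
      rw [← Real.rpow_natCast]
      exact Real.rpow_le_rpow_of_exponent_le h (half_le_self (Nat.cast_nonneg d))
  have hexp : τ⁻¹ ^ d ≤ d.factorial / c ^ d * Real.exp (c / τ) := by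
    have htaylor := Real.pow_div_factorial_le_exp (c / τ) (by positivity) d
    rw [div_le_iff₀ (by positivity), div_pow, div_le_iff₀ (by positivity)] at htaylor
    rw [div_mul_eq_mul_div, le_div_iff₀ (by positivity), inv_pow, inv_mul_eq_div,
      div_le_iff₀ (by positivity)]
    linarith
  calc τ ^ (-(d : ℝ) / 2) * Real.exp (-(c / τ))
      ≤ (1 + d.factorial / c ^ d * Real.exp (c / τ)) * Real.exp (-(c / τ)) := by
        gcongr; exact hrpow.trans (by gcongr)
    _ = Real.exp (-(c / τ)) + d.factorial / c ^ d := by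
        rw [add_mul, one_mul, mul_assoc, ← Real.exp_add]; simp
    _ ≤ 1 + d.factorial / c ^ d := by
        gcongr
        exact Real.exp_le_one_iff.2 (neg_nonpos.2 (by positivity))

lemma rpow_neg_mul_rpow_neg_half {a u : ℝ} (ha : 0 < a) (hu : 0 ≤ u) (s : ℝ) :
    a ^ (-s) * u ^ (-s / 2) = (a ^ 2 * u) ^ (-s / 2) := by
  rw [Real.mul_rpow (by positivity) hu, ← Real.rpow_natCast a 2, ← Real.rpow_mul ha.le,
    Nat.cast_ofNat, mul_div_cancel₀ _ two_ne_zero]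

variable [NeZero d]

/-- A walk with a large displacement has a large displacement in its first or in its second part,
and the other part is still free to produce the local limit bound. -/
lemma walkProb_fin_add_le {M₁ M₂ : ℕ} {z : Fin d → ℤ} {c : Fin d} {R : ℝ}
    (hz : 2 * R ≤ |(z c : ℝ)|) :
    walkProb (Fin (M₁ + M₂)) z ≤
      freq (largeExcursion d M₁ R) * (localLimitConst d * ((M₂ : ℝ) + 1) ^ (-(d : ℝ) / 2)) +
      freq (largeExcursion d M₂ R) * (localLimitConst d * ((M₁ : ℝ) + 1) ^ (-(d : ℝ) / 2)) := by
  have hcover : {s : Fin (M₁ + M₂) → Fin d × Bool | ∑ i, latStep (s i) = z} ⊆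
      {s | ∑ i, latStep (s i) = z ∧ s ∘ Fin.castAdd M₂ ∈ largeExcursion d M₁ R} ∪
      {s | ∑ i, latStep (s i) = z ∧ s ∘ Fin.natAdd M₁ ∈ largeExcursion d M₂ R} := by
    intro s hs
    have hsplit : (z c : ℝ) =
        ((∑ i, latStep (s (Fin.castAdd M₂ i))) c : ℤ) +
          ((∑ i, latStep (s (Fin.natAdd M₁ i))) c : ℤ) := by
      rw [← Int.cast_add, ← Pi.add_apply, ← Fin.sum_univ_add (fun i => latStep (s i)), hs]
    rw [hsplit] at hz
    have htriangle := hz.trans (abs_add_le _ _)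
    by_cases h : s ∘ Fin.castAdd M₂ ∈ largeExcursion d M₁ R
    · exact Or.inl ⟨hs, h⟩
    · refine Or.inr ⟨hs, M₂, le_rfl, c, ?_⟩
      have hsmall : |(((∑ i, latStep (s (Fin.castAdd M₂ i))) c : ℤ) : ℝ)| < R := by
        by_contra! hlarge
        exact h ⟨M₁, le_rfl, c, by rwa [prefixSum_length]⟩
      rw [prefixSum_length]
      simp only [Function.comp_apply]
      linarith
  refine (freq_mono hcover).trans ((freq_union_le _ _).trans (add_le_add ?_ ?_))
  · simpa using freq_sum_latStep_eq_inter_le (Fin.castAdd_injective M₁ M₂) (largeExcursion d M₁ R) z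
  · simpa using freq_sum_latStep_eq_inter_le (Fin.natAdd_injective M₂ M₁) (largeExcursion d M₂ R) z

lemma walkProb_fin_le {N : ℕ} (hN : 0 < N) {z : Fin d → ℤ} {c : Fin d} {R : ℝ} (hR : 0 ≤ R)
    (hz : 2 * R ≤ |(z c : ℝ)|) :
    walkProb (Fin N) z ≤ 4 * d * localLimitConst d *
      (((N : ℝ) / 2) ^ (-(d : ℝ) / 2) * Real.exp (-(R ^ 2 / (2 * N)))) := by
  obtain ⟨M₁, M₂, rfl, h₁, h₂⟩ : ∃ M₁ M₂, N = M₁ + M₂ ∧ N ≤ (M₁ + 1) * 2 ∧ N ≤ (M₂ + 1) * 2 :=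
    ⟨N / 2, N - N / 2, by omega, by omega, by omega⟩
  have hN' : (0 : ℝ) < (M₁ + M₂ : ℕ) := Nat.cast_pos.2 hN
  have hC := localLimitConst_nonneg (d := d)
  have hpow : ∀ M : ℕ, M₁ + M₂ ≤ (M + 1) * 2 → ((M : ℝ) + 1) ^ (-(d : ℝ) / 2) ≤
      (((M₁ + M₂ : ℕ) : ℝ) / 2) ^ (-(d : ℝ) / 2) := fun M hM => by
    refine Real.rpow_le_rpow_of_nonpos (by positivity) ?_
      (by linarith [(Nat.cast_nonneg d : (0 : ℝ) ≤ d)])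
    rw [div_le_iff₀ two_pos]
    exact_mod_cast hM
  calc _ ≤ _ := walkProb_fin_add_le hz
    _ ≤ 2 * d * Real.exp (-(R ^ 2 / (2 * (M₁ + M₂ : ℕ)))) *
          (localLimitConst d * (((M₁ + M₂ : ℕ) : ℝ) / 2) ^ (-(d : ℝ) / 2)) +
        2 * d * Real.exp (-(R ^ 2 / (2 * (M₁ + M₂ : ℕ)))) *
          (localLimitConst d * (((M₁ + M₂ : ℕ) : ℝ) / 2) ^ (-(d : ℝ) / 2)) := by
        refine add_le_add ?_ ?_ <;>
          refine mul_le_mul (freq_largeExcursion_le hR hN' (by simp))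
            (mul_le_mul_of_nonneg_left (hpow _ ‹_›) hC) (by positivity) (by positivity)
    _ = _ := by ring

lemma exists_rescaled_walkProb_le (c : Fin d) {r : ℝ} (hr : 0 < r) : ∃ K : ℝ,
    ∀ (a : ℝ) (N : ℕ) (z : Fin d → ℤ), 0 < a → r ≤ a * |(z c : ℝ)| →
      a ^ (-(d : ℝ)) * walkProb (Fin N) z ≤ K := by
  have hC := localLimitConst_nonneg (d := d)
  refine ⟨4 * d * localLimitConst d * (1 + d.factorial / (r ^ 2 / 16) ^ d), fun a N z ha hz => ?_⟩
  rcases Nat.eq_zero_or_pos N with rfl | hN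
  · have hz0 : 0 ≠ z := by
      rintro rfl
      simp only [Pi.zero_apply, Int.cast_zero, abs_zero, mul_zero] at hz
      exact hr.not_ge hz
    have hzero : walkProb (Fin 0) z = 0 := by simp [walkProb, freq, hz0]
    rw [hzero, mul_zero]
    positivity
  have hR : 2 * (r / (2 * a)) ≤ |(z c : ℝ)| := by
    rwa [← mul_div_assoc, mul_div_mul_left _ _ (two_ne_zero' ℝ), div_le_iff₀' ha]
  have hscale := rpow_neg_mul_rpow_neg_half ha (by positivity : (0 : ℝ) ≤ N / 2) d
  have hexponent : (r / (2 * a)) ^ 2 / (2 * N) = r ^ 2 / 16 / (a ^ 2 * (N / 2)) := by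
    field_simp; norm_num
  calc _ ≤ a ^ (-(d : ℝ)) * (4 * d * localLimitConst d * (((N : ℝ) / 2) ^ (-(d : ℝ) / 2) *
          Real.exp (-((r / (2 * a)) ^ 2 / (2 * N))))) := by
        gcongr; exact walkProb_fin_le hN (by positivity) hR
    _ = 4 * d * localLimitConst d * ((a ^ 2 * (N / 2)) ^ (-(d : ℝ) / 2) *
          Real.exp (-(r ^ 2 / 16 / (a ^ 2 * (N / 2))))) := by
        rw [← hscale, hexponent]; ring
    _ ≤ _ := by
        gcongr
        exact rpow_neg_half_mul_exp_neg_le d (by positivity) (by positivity)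

end OffDiagonal

/-! ### Lattice paths and their characteristic functions -/

section LatticePaths

variable {d : ℕ} {x y : Ed d} {a : ℝ}

lemma stepVec_apply (a : ℝ) (p : Fin d × Bool) (k : Fin d) :
    stepVec a p k = a * (latStep p k : ℝ) := by
  rcases p with ⟨c, b⟩
  cases b <;> by_cases hk : k = c <;> simp [stepVec, latStep, hk]

lemma sum_stepVec_eq_iff {ι : Type*} [Fintype ι] (ha : a ≠ 0) {z : Fin d → ℤ}
    (hz : ∀ k, (y - x) k = a * z k) (s : ι → Fin d × Bool) :
    x + ∑ i, stepVec a (s i) = y ↔ ∑ i, latStep (s i) = z := by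
  rw [← eq_sub_iff_add_eq', PiLp.ext_iff, funext_iff]
  refine forall_congr' fun k => ?_
  rw [hz, ← Int.cast_inj (α := ℝ), ← mul_right_inj' (b := (_ : ℝ)) ha]
  simp [stepVec_apply, ← Finset.mul_sum, ha]

instance (x y : Ed d) (a : ℝ) (N : ℕ) [NeZero d] : IsFiniteMeasure (VxyaN x y a N) := by
  have hd : ((2 * d : ℕ) : ℝ≥0∞) ^ N ≠ 0 := by simp [NeZero.ne d]
  have hmass : ENNReal.ofReal (a ^ (-(d : ℝ))) * (((2 * d : ℕ) : ℝ≥0∞) ^ N)⁻¹ < ∞ :=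
    ENNReal.mul_lt_top ENNReal.ofReal_lt_top (ENNReal.inv_lt_top.2 (pos_iff_ne_zero.2 hd))
  rw [VxyaN, Measure.sum_fintype]
  constructor
  simp only [Measure.coe_finsetSum, Finset.sum_apply, Measure.smul_apply, smul_eq_mul]
  exact ENNReal.sum_lt_top.2 fun s _ => ENNReal.mul_lt_top hmass (measure_lt_top _ _)

lemma integral_VxyaN [NeZero d] {𝕜 : Type*} [RCLike 𝕜] (ha : 0 < a) {z : Fin d → ℤ}
    (hz : ∀ k, (y - x) k = a * z k) (N : ℕ) (G : PathSp d → 𝕜) :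
    ∫ ω, G ω.1 ∂(VxyaN x y a N) = a ^ (-(d : ℝ)) • 𝔼 s : Fin N → Fin d × Bool,
      {s | ∑ i, latStep (s i) = z}.indicator
        (fun s => G (pwLinE x N fun i => stepVec a (s i))) s := by
  have hd : ((2 * d : ℕ) : ℝ≥0∞) ^ N ≠ 0 := by simp [NeZero.ne d]
  have hmass : ENNReal.ofReal (a ^ (-(d : ℝ))) * (((2 * d : ℕ) : ℝ≥0∞) ^ N)⁻¹ ≠ ∞ :=
    ENNReal.mul_ne_top ENNReal.ofReal_ne_top (ENNReal.inv_ne_top.2 hd)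
  have hsum : ∑ s : {s : Fin N → Fin d × Bool // x + ∑ i, stepVec a (s i) = y},
      G (pwLinE x N fun i => stepVec a (s.1 i)) = ∑ s : Fin N → Fin d × Bool,
        {s | ∑ i, latStep (s i) = z}.indicator
          (fun s => G (pwLinE x N fun i => stepVec a (s i))) s := by
    classical
    simp only [← sum_stepVec_eq_iff ha.ne' hz, indicator_apply, mem_ofPred_eq]
    rw [← Finset.sum_filter]
    symm
    exact Finset.sum_subtype _ (fun s => Finset.mem_filter_univ s) _
  rw [VxyaN, Measure.sum_fintype, integral_finsetSum_measure fun s _ =>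
    (integrable_dirac enorm_lt_top).smul_measure hmass]
  simp only [integral_smul_measure, integral_dirac]
  rw [← Finset.smul_sum, ENNReal.toReal_mul, ENNReal.toReal_ofReal (by positivity), mul_smul,
    Fintype.expect_eq_sum_div_card, ← hsum]
  simp [pwLin2, RCLike.real_smul_eq_coe_mul, div_eq_inv_mul, mul_comm, map_ofNat]

end LatticePaths

section ClampedTimes

lemma clamp01_mem (r : ℝ) : clamp01 r ∈ Icc (0 : ℝ) 1 :=
  ⟨le_min zero_le_one (le_max_left _ _), min_le_left _ _⟩

lemma clamp01_mono : Monotone clamp01 := fun _ _ h => by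
  unfold clamp01; gcongr

lemma sum_range_clamp01 (N : ℕ) (r : ℝ) :
    ∑ i ∈ Finset.range N, clamp01 (r - i) = min (N : ℝ) (max 0 r) := by
  induction N with
  | zero => simp
  | succ N ih =>
    rw [Finset.sum_range_succ, ih, clamp01]
    push_cast
    have hN : (0 : ℝ) ≤ N := N.cast_nonneg
    rcases le_total r N with h | h
    · rw [max_eq_left (sub_nonpos.2 h), min_eq_right zero_le_one, min_eq_right (max_le hN h),
        min_eq_right (max_le (by linarith) (by linarith)), add_zero]
    · rw [max_eq_right (sub_nonneg.2 h), max_eq_right (hN.trans h), min_eq_left h,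
        ← min_add_add_left]
      ring_nf

lemma sum_clamp01 {t : ℝ} (ht : t ∈ Icc (0 : ℝ) 1) (N : ℕ) :
    ∑ i : Fin N, clamp01 (N * t - (i : ℕ)) = N * t := by
  have hN : (0 : ℝ) ≤ N := N.cast_nonneg
  rw [Fin.sum_univ_eq_sum_range (fun i => clamp01 (N * t - i)) N, sum_range_clamp01,
    max_eq_right (mul_nonneg hN ht.1), min_eq_right (mul_le_of_le_one_right hN ht.2)]

lemma clamp01_mul_one_sub_le {u v : ℝ} (huv : u ≤ v) :
    clamp01 u * (1 - clamp01 v) ≤ clamp01 u - clamp01 (u - 1) := by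
  have hu := clamp01_mem u
  have hv := clamp01_mem v
  rcases le_total u 1 with h | h
  · rw [clamp01_of_nonpos (sub_nonpos.2 h)]
    nlinarith [hu.1, hv.1]
  · rw [clamp01_of_one_le (h.trans huv), sub_self, mul_zero]
    exact sub_nonneg.2 (clamp01_mono (by linarith))

lemma sum_clamp01_mul_one_sub_le (N : ℕ) {r r' : ℝ} (h : r ≤ r') :
    ∑ i : Fin N, clamp01 (r - (i : ℕ)) * (1 - clamp01 (r' - (i : ℕ))) ≤ 1 := by
  rw [Fin.sum_univ_eq_sum_range (fun i => clamp01 (r - i) * (1 - clamp01 (r' - i))) N]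
  calc _ ≤ ∑ i ∈ Finset.range N, (clamp01 (r - i) - clamp01 (r - (i + 1 : ℕ))) := by
        refine Finset.sum_le_sum fun i _ => (clamp01_mul_one_sub_le (by linarith)).trans_eq ?_
        push_cast; ring_nf
    _ = clamp01 (r - (0 : ℕ)) - clamp01 (r - N) :=
        Finset.sum_range_sub' (fun i : ℕ => clamp01 (r - i)) N
    _ ≤ 1 := by linarith [(clamp01_mem (r - (0 : ℕ))).2, (clamp01_mem (r - N)).1]

lemma tendsto_sum_clamp01_mul {s t : ℝ} (hs : s ∈ Icc (0 : ℝ) 1) (ht : t ∈ Icc (0 : ℝ) 1) :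
    Tendsto (fun N : ℕ => (N : ℝ)⁻¹ *
      ∑ i : Fin N, clamp01 (N * s - (i : ℕ)) * clamp01 (N * t - (i : ℕ))) atTop
      (𝓝 (min s t)) := by
  wlog hst : s ≤ t generalizing s t
  · rw [min_comm]
    simpa only [mul_comm] using this ht hs (le_of_not_ge hst)
  set ρ : ℕ → ℝ := fun N =>
    ∑ i : Fin N, clamp01 (N * s - (i : ℕ)) * (1 - clamp01 (N * t - (i : ℕ)))
  have hρ0 : ∀ N, 0 ≤ ρ N := fun N => Finset.sum_nonneg fun i _ =>
    mul_nonneg (clamp01_mem _).1 (sub_nonneg.2 (clamp01_mem _).2)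
  have hρ1 : ∀ N, ρ N ≤ 1 := fun N => sum_clamp01_mul_one_sub_le N (by gcongr)
  have hρ : Tendsto (fun N : ℕ => (N : ℝ)⁻¹ * ρ N) atTop (𝓝 0) :=
    squeeze_zero (fun N => mul_nonneg (by positivity) (hρ0 N))
      (fun N => mul_le_of_le_one_right (by positivity) (hρ1 N)) tendsto_inv_atTop_nhds_zero_nat
  rw [min_eq_left hst, ← sub_zero s]
  refine (tendsto_const_nhds.sub hρ).congr' ?_
  filter_upwards [eventually_ne_atTop 0] with N hN
  have hsum : ∑ i : Fin N, clamp01 (N * s - (i : ℕ)) * clamp01 (N * t - (i : ℕ)) = N * s - ρ N := by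
    rw [eq_sub_iff_add_eq, ← Finset.sum_add_distrib]
    exact (Finset.sum_congr rfl fun i _ => by ring).trans (sum_clamp01 hs N)
  rw [sub_zero, hsum, mul_sub, inv_mul_cancel_left₀ (Nat.cast_ne_zero.2 hN)]

end ClampedTimes

section PathCharacters

variable {d K : ℕ} {T : Fin K → ℝ}

/-- The character of the path space that tests a path at the times `T` against the
frequencies `ξ`. -/
def pathChar (T : Fin K → ℝ) (ξ : Fin K → Ed d) (ω : PathSp d) : ℂ :=
  Complex.exp (Complex.I * (∑ j, ⟪ξ j, evalAt ω (T j)⟫ : ℝ))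

/-- The frequency against which `pathChar T ξ` tests the `i`-th increment of an `N`-step
piecewise linear path. -/
def stepFreq (T : Fin K → ℝ) (ξ : Fin K → Ed d) (N i : ℕ) : Ed d :=
  ∑ j, clamp01 (N * T j - i) • ξ j

/-- The variance of `∑ j, ⟪ξ j, B (T j)⟫` for a standard Brownian motion `B`. -/
def brownianVariance (T : Fin K → ℝ) (ξ : Fin K → Ed d) : ℝ :=
  ∑ j, ∑ l, min (T j) (T l) * ⟪ξ j, ξ l⟫

lemma norm_stepFreq_le (T : Fin K → ℝ) (ξ : Fin K → Ed d) (N i : ℕ) :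
    ‖stepFreq T ξ N i‖ ≤ ∑ j, ‖ξ j‖ := by
  refine (norm_sum_le _ _).trans (Finset.sum_le_sum fun j _ => ?_)
  rw [norm_smul, Real.norm_of_nonneg (clamp01_mem _).1]
  exact mul_le_of_le_one_left (norm_nonneg _) (clamp01_mem _).2

lemma evalAt_pwLinE {t : ℝ} (ht : t ∈ Icc (0 : ℝ) 1) (x : Ed d) (N : ℕ) (v : Fin N → Ed d) :
    evalAt (pwLinE x N v) t = x + ∑ i : Fin N, clamp01 (N * t - (i : ℕ)) • v i := by
  rw [evalAt, projIcc_of_mem _ ht]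
  rfl

lemma pathChar_pwLinE (hT : ∀ j, T j ∈ Icc (0 : ℝ) 1) (ξ : Fin K → Ed d) (x : Ed d) (N : ℕ)
    (v : Fin N → Ed d) :
    pathChar T ξ (pwLinE x N v) = Complex.exp (Complex.I * (⟪∑ j, ξ j, x⟫ : ℝ)) *
      ∏ i : Fin N, Complex.exp (Complex.I * (⟪stepFreq T ξ N i, v i⟫ : ℝ)) := by
  have hsum : ∑ j, ⟪ξ j, evalAt (pwLinE x N v) (T j)⟫ =
      ⟪∑ j, ξ j, x⟫ + ∑ i : Fin N, ⟪stepFreq T ξ N i, v i⟫ := by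
    simp only [evalAt_pwLinE (hT _), inner_add_right, Finset.sum_add_distrib, inner_sum, stepFreq,
      sum_inner, real_inner_smul_left, real_inner_smul_right]
    rw [Finset.sum_comm]
  rw [pathChar, hsum, ← Complex.exp_sum, ← Complex.exp_add, ← Finset.mul_sum,
    Complex.ofReal_add, mul_add, ← Complex.ofReal_sum]

lemma sum_norm_add_stepFreq_sq (hT : ∀ j, T j ∈ Icc (0 : ℝ) 1) (ξ : Fin K → Ed d) (p : Ed d)
    (N : ℕ) :
    ∑ i : Fin N, ‖p + stepFreq T ξ N i‖ ^ 2 =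
      N * (‖p‖ ^ 2 + 2 * ⟪p, ∑ j, T j • ξ j⟫) + ∑ j, ∑ l,
        (∑ i : Fin N, clamp01 (N * T j - (i : ℕ)) * clamp01 (N * T l - (i : ℕ))) * ⟪ξ j, ξ l⟫ := by
  have hcross : ∑ i : Fin N, ⟪p, stepFreq T ξ N i⟫ = N * ⟪p, ∑ j, T j • ξ j⟫ := by
    simp only [stepFreq, inner_sum, real_inner_smul_right]
    rw [Finset.sum_comm, Finset.mul_sum]
    refine Finset.sum_congr rfl fun j _ => ?_
    rw [← Finset.sum_mul, sum_clamp01 (hT j), mul_assoc]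
  have hsq : ∑ i : Fin N, ‖stepFreq T ξ N i‖ ^ 2 = ∑ j, ∑ l,
      (∑ i : Fin N, clamp01 (N * T j - (i : ℕ)) * clamp01 (N * T l - (i : ℕ))) * ⟪ξ j, ξ l⟫ := by
    simp only [← real_inner_self_eq_norm_sq, stepFreq, inner_sum, sum_inner,
      real_inner_smul_left, real_inner_smul_right, Finset.sum_mul]
    rw [Finset.sum_comm]
    conv_lhs => enter [2, j]; rw [Finset.sum_comm]
    rw [Finset.sum_comm]
    exact Finset.sum_congr rfl fun j _ => Finset.sum_congr rfl fun l _ =>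
      Finset.sum_congr rfl fun i _ => by ring
  simp only [norm_add_sq_real, Finset.sum_add_distrib, ← Finset.mul_sum, hcross, hsq]
  simp
  ring

lemma tendsto_sum_norm_add_stepFreq_sq (hT : ∀ j, T j ∈ Icc (0 : ℝ) 1) (ξ : Fin K → Ed d)
    (p : Ed d) :
    Tendsto (fun N : ℕ => (N : ℝ)⁻¹ * ∑ i : Fin N, ‖p + stepFreq T ξ N i‖ ^ 2) atTop
      (𝓝 (‖p‖ ^ 2 + 2 * ⟪p, ∑ j, T j • ξ j⟫ + brownianVariance T ξ)) := by
  have hcov : Tendsto (fun N : ℕ => ∑ j, ∑ l, ((N : ℝ)⁻¹ * ∑ i : Fin N,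
      clamp01 (N * T j - (i : ℕ)) * clamp01 (N * T l - (i : ℕ))) * ⟪ξ j, ξ l⟫) atTop
      (𝓝 (brownianVariance T ξ)) :=
    tendsto_finsetSum _ fun j _ => tendsto_finsetSum _ fun l _ =>
      (tendsto_sum_clamp01_mul (hT j) (hT l)).mul_const _
  refine (hcov.const_add (‖p‖ ^ 2 + 2 * ⟪p, ∑ j, T j • ξ j⟫)).congr' ?_
  filter_upwards [eventually_ne_atTop 0] with N hN
  rw [sum_norm_add_stepFreq_sq hT, mul_add, inv_mul_cancel_left₀ (Nat.cast_ne_zero.2 hN)]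
  simp only [mul_assoc, ← Finset.mul_sum]

lemma integral_pathChar_VxyaN [NeZero d] {x y : Ed d} {a : ℝ} (ha : 0 < a) {z : Fin d → ℤ}
    (hz : ∀ k, (y - x) k = a * z k) {N : ℕ} (hN : Even ((N : ℤ) - ∑ k, z k))
    (hT : ∀ j, T j ∈ Icc (0 : ℝ) 1) (ξ : Fin K → Ed d) :
    ∫ ω, pathChar T ξ ω.1 ∂(VxyaN x y a N) =
      Complex.exp (Complex.I * (⟪∑ j, ξ j, x⟫ : ℝ)) * (((2 / (2 * π) ^ d : ℝ) : ℂ) *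
        ∫ p : Ed d, ((a • ·) ⁻¹' halfZone d).indicator (fun p =>
          Complex.exp (-(Complex.I * (⟪p, y - x⟫ : ℝ))) *
            (∏ i : Fin N, meanCos (a • (p + stepFreq T ξ N i)) : ℝ)) p) := by
  set F : Ed d → ℂ := fun θ => latticeChar θ (-z) *
    ∏ i : Fin N, (meanCos (θ + a • stepFreq T ξ N i) : ℂ) with hF
  have hinv : 𝔼 s : Fin N → Fin d × Bool, {s | ∑ i, latStep (s i) = z}.indicator
      (fun s => pathChar T ξ (pwLinE x N fun i => stepVec a (s i))) s =
      Complex.exp (Complex.I * (⟪∑ j, ξ j, x⟫ : ℝ)) * (((2 / (2 * π) ^ d : ℝ) : ℂ) *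
        ∫ θ in halfZone d, F θ) := by
    simp only [pathChar_pwLinE hT, indicator_const_mul, ← Finset.mul_expect]
    rw [expect_sum_latStep_eq_setIntegral_halfZone (fun (i : Fin N) p =>
      Complex.exp (Complex.I * (⟪stepFreq T ξ N i, stepVec a p⟫ : ℝ))) (by simpa using hN)]
    simp only [expect_cexp_inner_stepVec_mul_latticeChar, hF]
  have hscale : ∀ p : Ed d, F (a • p) = Complex.exp (-(Complex.I * (⟪p, y - x⟫ : ℝ))) *
      (∏ i : Fin N, meanCos (a • (p + stepFreq T ξ N i)) : ℝ) := fun p => by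
    have hphase : ∑ k, (a • p) k * ((-z) k : ℤ) = -⟪p, y - x⟫ := by
      simp only [PiLp.inner_apply, hz, ← Finset.sum_neg_distrib]
      exact Finset.sum_congr rfl fun k _ => by simp; ring
    simp only [hF, latticeChar, hphase, smul_add]
    push_cast
    ring_nf
  have hsubst := Measure.integral_comp_smul volume ((halfZone d).indicator F) a
  rw [integral_indicator (by exact measurableSet_centeredBox _), abs_of_pos (by positivity),
    finrank_euclideanSpace_fin, ← Real.rpow_natCast, ← Real.rpow_neg ha.le] at hsubst
  rw [integral_VxyaN ha hz N, hinv, ← mul_smul_comm, ← mul_smul_comm, ← hsubst]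
  simp only [← hscale]
  rfl

end PathCharacters

/-! ### Convergence of characteristic functions in the diffusive limit -/

section CosineProducts

variable {d : ℕ}

lemma norm_prod_sub_prod_le {ι R : Type*} [NormedCommRing R] [NormOneClass R] (s : Finset ι)
    {b c : ι → R} (hb : ∀ i ∈ s, ‖b i‖ ≤ 1) (hc : ∀ i ∈ s, ‖c i‖ ≤ 1) :
    ‖∏ i ∈ s, b i - ∏ i ∈ s, c i‖ ≤ ∑ i ∈ s, ‖b i - c i‖ := by
  classical
  induction s using Finset.induction_on with
  | empty => simp
  | insert j s hj ih =>
    rw [Finset.forall_mem_insert] at hb hc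
    rw [Finset.prod_insert hj, Finset.prod_insert hj, Finset.sum_insert hj]
    have hprod : ‖∏ i ∈ s, b i‖ ≤ 1 :=
      (Finset.norm_prod_le s b).trans (Finset.prod_le_one (fun _ _ => norm_nonneg _) hb.2)
    calc ‖b j * ∏ i ∈ s, b i - c j * ∏ i ∈ s, c i‖
        = ‖(b j - c j) * ∏ i ∈ s, b i + c j * (∏ i ∈ s, b i - ∏ i ∈ s, c i)‖ := by ring_nf
      _ ≤ ‖b j - c j‖ * ‖∏ i ∈ s, b i‖ + ‖c j‖ * ‖∏ i ∈ s, b i - ∏ i ∈ s, c i‖ :=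
          (norm_add_le _ _).trans (add_le_add (norm_mul_le _ _) (norm_mul_le _ _))
      _ ≤ ‖b j - c j‖ * 1 + 1 * ∑ i ∈ s, ‖b i - c i‖ := by
          gcongr
          exacts [hc.1, ih hb.2 hc.2]
      _ = _ := by ring

lemma abs_meanCos_sub_one_sub_le [NeZero d] {u : Ed d} (hu : ‖u‖ ≤ 1) :
    |meanCos u - (1 - ‖u‖ ^ 2 / (2 * d))| ≤ ‖u‖ ^ 4 := by
  have hmean : meanCos u - (1 - ‖u‖ ^ 2 / (2 * d)) =
      𝔼 k, (Real.cos (u k) - (1 - u k ^ 2 / 2)) := by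
    rw [Finset.expect_sub_distrib, Finset.expect_sub_distrib,
      Finset.expect_const Finset.univ_nonempty, ← Finset.expect_div,
      Fintype.expect_eq_sum_div_card fun k => u k ^ 2, ← EuclideanSpace.real_norm_sq_eq,
      Fintype.card_fin, div_div, mul_comm (d : ℝ), meanCos]
  rw [hmean]
  refine (Finset.abs_expect_le _ _).trans
    (Finset.expect_le Finset.univ_nonempty fun k _ => ?_)
  have hk : |u k| ≤ ‖u‖ := by simpa using PiLp.norm_apply_le u k
  calc _ ≤ |u k| ^ 4 * (5 / 96) := Real.cos_bound (hk.trans hu)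
    _ ≤ ‖u‖ ^ 4 * 1 := by gcongr; norm_num
    _ = ‖u‖ ^ 4 := mul_one _

lemma abs_meanCos_sub_exp_le [NeZero d] {u : Ed d} (hu : ‖u‖ ≤ 1) :
    |meanCos u - Real.exp (-(‖u‖ ^ 2 / (2 * d)))| ≤ 2 * ‖u‖ ^ 4 := by
  have hd : (1 : ℝ) ≤ d := Nat.one_le_cast.2 NeZero.one_le
  have hq0 : 0 ≤ ‖u‖ ^ 2 / (2 * d) := by positivity
  have hq1 : ‖u‖ ^ 2 / (2 * d) ≤ ‖u‖ ^ 2 := div_le_self (by positivity) (by linarith)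
  have hexp : |Real.exp (-(‖u‖ ^ 2 / (2 * d))) - (1 - ‖u‖ ^ 2 / (2 * d))| ≤ ‖u‖ ^ 4 :=
    calc _ = |Real.exp (-(‖u‖ ^ 2 / (2 * d))) - 1 - -(‖u‖ ^ 2 / (2 * d))| := by ring_nf
      _ ≤ (-(‖u‖ ^ 2 / (2 * d))) ^ 2 := Real.abs_exp_sub_one_sub_id_le <| by
          rw [abs_neg, abs_of_nonneg hq0]
          exact hq1.trans (pow_le_one₀ (norm_nonneg _) hu)
      _ ≤ (‖u‖ ^ 2) ^ 2 := by rw [neg_sq]; gcongr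
      _ = ‖u‖ ^ 4 := by ring
  rw [abs_sub_comm] at hexp
  linarith [abs_sub_le (meanCos u) (1 - ‖u‖ ^ 2 / (2 * d)) (Real.exp (-(‖u‖ ^ 2 / (2 * d)))),
    abs_meanCos_sub_one_sub_le hu]

lemma tendsto_prod_meanCos [NeZero d] {α : Type*} {l : Filter α} {a : α → ℝ} {N : α → ℕ}
    {t B L : ℝ} (ha : Tendsto a l (𝓝 0)) (hN : Tendsto (fun n => N n * a n ^ 2 / d) l (𝓝 t))
    {u : ∀ n, Fin (N n) → Ed d} (hB : ∀ n i, ‖u n i‖ ≤ B)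
    (hL : Tendsto (fun n => (N n : ℝ)⁻¹ * ∑ i, ‖u n i‖ ^ 2) l (𝓝 L)) :
    Tendsto (fun n => ∏ i, meanCos (a n • u n i)) l (𝓝 (Real.exp (-(t / 2 * L)))) := by
  have hd : (d : ℝ) ≠ 0 := Nat.cast_ne_zero.2 (NeZero.ne d)
  have hnorm : ∀ n i, ‖a n • u n i‖ ≤ |a n| * B := fun n i => by
    rw [norm_smul, Real.norm_eq_abs]
    exact mul_le_mul_of_nonneg_left (hB n i) (abs_nonneg _)
  have hexp : Tendsto (fun n => ∏ i, Real.exp (-(‖a n • u n i‖ ^ 2 / (2 * d)))) l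
      (𝓝 (Real.exp (-(t / 2 * L)))) := by
    refine ((Real.continuous_exp.tendsto _).comp ((hN.div_const 2).mul hL).neg).congr fun n => ?_
    simp only [Function.comp, ← Real.exp_sum, Finset.sum_neg_distrib, norm_smul, mul_pow,
      Real.norm_eq_abs, sq_abs, ← Finset.sum_div, ← Finset.mul_sum]
    rcases eq_or_ne (N n) 0 with hn | hn
    · have : IsEmpty (Fin (N n)) := hn ▸ Fin.isEmpty
      simp
    · have : (N n : ℝ) ≠ 0 := Nat.cast_ne_zero.2 hn
      congr 2
      field_simp
  have hbound : Tendsto (fun n => (N n * a n ^ 2 / d) * (2 * d * B ^ 4 * a n ^ 2)) l (𝓝 0) := by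
    simpa using hN.mul ((ha.pow 2).const_mul (2 * d * B ^ 4))
  have hdiff : Tendsto (fun n => ∏ i, meanCos (a n • u n i) -
      ∏ i, Real.exp (-(‖a n • u n i‖ ^ 2 / (2 * d)))) l (𝓝 0) := by
    have haB : Tendsto (fun n => |a n| * B) l (𝓝 0) := by simpa using ha.abs.mul_const B
    refine squeeze_zero_norm' ?_ hbound
    filter_upwards [haB.eventually_lt_const zero_lt_one] with n hn
    calc _ ≤ ∑ i, ‖meanCos (a n • u n i) - Real.exp (-(‖a n • u n i‖ ^ 2 / (2 * d)))‖ :=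
          norm_prod_sub_prod_le _ (fun i _ => abs_meanCos_le_one _) fun i _ => by
            rw [Real.norm_eq_abs, Real.abs_exp, Real.exp_le_one_iff, neg_nonpos]; positivity
      _ ≤ ∑ i : Fin (N n), 2 * (|a n| * B) ^ 4 := Finset.sum_le_sum fun i _ =>
          (abs_meanCos_sub_exp_le ((hnorm n i).trans hn.le)).trans (by gcongr; exact hnorm n i)
      _ = (N n * a n ^ 2 / d) * (2 * d * B ^ 4 * a n ^ 2) := by
          rw [mul_pow, pow_abs, abs_of_nonneg (by positivity)]
          simp only [Finset.sum_const, Finset.card_univ, Fintype.card_fin, nsmul_eq_mul]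
          field_simp
  simpa using hdiff.add hexp

lemma abs_prod_meanCos_le [NeZero d] {a B : ℝ} (haB : |a| * B ≤ π / 6) {p : Ed d}
    (hp : a • p ∈ halfZone d) {N : ℕ} {c : Fin N → Ed d} (hc : ∀ i, ‖c i‖ ≤ B) :
    |∏ i, meanCos (a • (p + c i))| ≤
      Real.exp (cosRate d * (N * a ^ 2) * B ^ 2 - cosRate d * (N * a ^ 2) / 2 * ‖p‖ ^ 2) := by
  have hterm : ∀ i, |meanCos (a • (p + c i))| ≤
      Real.exp (cosRate d * a ^ 2 * B ^ 2 - cosRate d * a ^ 2 / 2 * ‖p‖ ^ 2) := fun i => by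
    have hsmall : ‖a • c i‖ ≤ π / 6 := by
      rw [norm_smul, Real.norm_eq_abs]
      exact (mul_le_mul_of_nonneg_left (hc i) (abs_nonneg a)).trans haB
    have hwide : a • (p + c i) ∈ wideZone d := by
      rw [smul_add]; exact add_mem_wideZone hp hsmall
    have hnorm : ‖p‖ ^ 2 / 2 - B ^ 2 ≤ ‖p + c i‖ ^ 2 := by
      have htri : ‖p‖ ≤ ‖p + c i‖ + B := by
        linarith [norm_sub_le (p + c i) (c i), hc i, congrArg norm (add_sub_cancel_right p (c i))]
      nlinarith [norm_nonneg p, norm_nonneg (p + c i), sq_nonneg (‖p + c i‖ - B)]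
    refine (abs_meanCos_le hwide).trans (Real.exp_le_exp.2 ?_)
    rw [norm_smul, mul_pow, Real.norm_eq_abs, sq_abs]
    nlinarith [mul_le_mul_of_nonneg_left hnorm (mul_nonneg (cosRate_pos (d := d)).le (sq_nonneg a))]
  calc |∏ i, meanCos (a • (p + c i))|
      ≤ ∏ _i : Fin N, Real.exp (cosRate d * a ^ 2 * B ^ 2 - cosRate d * a ^ 2 / 2 * ‖p‖ ^ 2) := by
        rw [Finset.abs_prod]
        exact Finset.prod_le_prod (fun i _ => abs_nonneg _) fun i _ => hterm i
    _ = _ := by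
        rw [Finset.prod_const, Finset.card_univ, Fintype.card_fin, ← Real.exp_nat_mul]
        congr 1; ring

lemma eventually_smul_mem_halfZone [NeZero d] {α : Type*} {l : Filter α} {a : α → ℝ}
    (ha : Tendsto a l (𝓝 0)) (p : Ed d) : ∀ᶠ n in l, a n • p ∈ halfZone d := by
  simp only [halfZone, centeredBox, mem_ofPred_eq, Filter.eventually_all]
  intro k
  have hlim : Tendsto (fun n => |(a n • p) k|) l (𝓝 0) := by simpa using (ha.mul_const (p k)).abs
  refine hlim.eventually_le_const ?_
  rw [Function.update_apply]
  split_ifs <;> positivity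

end CosineProducts

section PinnedGaussian

variable {d : ℕ}

/-- The heat kernel of `ℝ^d`, i.e. the density of the centred Gaussian of covariance `t`. -/
def heatKernel (t : ℝ) (v : Ed d) : ℝ :=
  (2 * π * t) ^ (-(d : ℝ) / 2) * Real.exp (-‖v‖ ^ 2 / (2 * t))

/-- The characteristic function at times `T` and frequencies `ξ` of the pinned Wiener measure of
variance `t` from `x` to `y`. -/
def pinnedCharFun (x y : Ed d) (t : ℝ) {K : ℕ} (T : Fin K → ℝ) (ξ : Fin K → Ed d) : ℂ :=
  (heatKernel t (x - y) : ℂ) *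
    Complex.exp ((-(t / 2) * (brownianVariance T ξ - ‖∑ j, T j • ξ j‖ ^ 2) : ℝ) +
      Complex.I * (∑ j, ⟪ξ j, (1 - T j) • x + T j • y⟫ : ℝ))

lemma sum_Iic_sub {n : ℕ} (ts : ℕ → ℝ) (j : Fin n) :
    ∑ i ∈ Finset.Iic j, (ts (i + 1) - ts i) = ts (j + 1) - ts 0 := by
  have hmap := Finset.sum_map (Finset.Iic j) Fin.valEmbedding fun i => ts (i + 1) - ts i
  rw [Fin.map_valEmbedding_Iic, ← Nat.range_succ_eq_Iic, Finset.sum_range_sub] at hmap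
  exact hmap.symm

lemma sum_mul_norm_sum_Ici_sq {n : ℕ} {ts : ℕ → ℝ} (h0 : ts 0 = 0)
    (hts : ∀ i < n, ts i < ts (i + 1)) (ξ : Fin n → Ed d) :
    ∑ i : Fin n, (ts (i + 1) - ts i) * ‖∑ j ∈ Finset.Ici i, ξ j‖ ^ 2 =
      brownianVariance (fun i : Fin n => ts (i + 1)) ξ := by
  have hmono : Monotone fun i : Fin n => ts (i + 1) := fun i j hij =>
    monotoneOn_of_le_add_one ordConnected_Iic (fun k _ _ hk => (hts k hk).le)
      (mem_Iic.2 i.2) (mem_Iic.2 j.2) (Nat.succ_le_succ hij)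
  have hsq : ∀ i : Fin n, (ts (i + 1) - ts i) * ‖∑ j ∈ Finset.Ici i, ξ j‖ ^ 2 =
      ∑ j, ∑ l, if i ≤ min j l then (ts (i + 1) - ts i) * ⟪ξ j, ξ l⟫ else 0 := fun i => by
    have hIci : ∑ j ∈ Finset.Ici i, ξ j = ∑ j, if i ≤ j then ξ j else 0 := by
      rw [← Finset.sum_filter, Finset.filter_le_eq_Ici]
    simp only [← real_inner_self_eq_norm_sq, hIci, sum_inner, inner_sum, Finset.mul_sum]
    refine Finset.sum_congr rfl fun j _ => Finset.sum_congr rfl fun l _ => ?_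
    by_cases hj : i ≤ j <;> by_cases hl : i ≤ l <;> simp [hj, hl, real_inner_comm]
  simp only [hsq, brownianVariance, ← hmono.map_min]
  rw [Finset.sum_comm]
  refine Finset.sum_congr rfl fun j _ => ?_
  rw [Finset.sum_comm]
  refine Finset.sum_congr rfl fun l _ => ?_
  rw [← Finset.sum_filter, Finset.filter_ge_eq_Iic, ← Finset.sum_mul, sum_Iic_sub, h0, sub_zero]

lemma IsPinnedWienerFamily.integral_pathChar {x y : Ed d} {Wt : ℝ → Measure (Omega2 x y)}
    (hW : IsPinnedWienerFamily x y Wt) {t : ℝ} (ht : 0 < t) {n : ℕ} {ts : ℕ → ℝ} (h0 : ts 0 = 0)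
    (hts : ∀ i < n, ts i < ts (i + 1)) (h1 : ts n < 1) (ξ : Fin n → Ed d) :
    ∫ ω, pathChar (fun i : Fin n => ts (i + 1)) ξ ω.1 ∂(Wt t) =
      pinnedCharFun x y t (fun i : Fin n => ts (i + 1)) ξ := by
  rw [pinnedCharFun, ← sum_mul_norm_sum_Ici_sq h0 hts]
  exact (hW t ht).2 n ts h0 hts h1 ξ

lemma two_div_two_pi_pow_mul_rpow {t : ℝ} (ht : 0 < t) (d : ℕ) :
    2 / (2 * π) ^ d * (π / (t / 2)) ^ ((d : ℝ) / 2) = 2 * (2 * π * t) ^ (-(d : ℝ) / 2) := by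
  have hsq : (2 * π) ^ d = ((2 * π) ^ ((d : ℝ) / 2)) ^ 2 := by
    rw [← Real.rpow_mul_natCast (by positivity), Nat.cast_ofNat, div_mul_cancel₀ _ two_ne_zero,
      Real.rpow_natCast]
  rw [(by field_simp : π / (t / 2) = 2 * π / t), Real.div_rpow (by positivity) ht.le, hsq,
    neg_div, Real.rpow_neg (by positivity), Real.mul_rpow (by positivity) ht.le]
  field_simp

lemma integral_cexp_inner_mul_gaussian {t : ℝ} (ht : 0 < t) (w : Ed d) :
    ((2 / (2 * π) ^ d : ℝ) : ℂ) * ∫ p : Ed d,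
      Complex.exp (-(Complex.I * (⟪p, w⟫ : ℝ))) * (Real.exp (-(t / 2 * ‖p‖ ^ 2)) : ℝ) =
      2 * (heatKernel t w : ℂ) := by
  have hexp : ∀ p : Ed d, Complex.exp (-(Complex.I * (⟪p, w⟫ : ℝ))) *
      (Real.exp (-(t / 2 * ‖p‖ ^ 2)) : ℝ) =
        Complex.exp (-(t / 2 : ℝ) * ‖p‖ ^ 2 + -Complex.I * (⟪w, p⟫ : ℝ)) := fun p => by
    rw [Complex.ofReal_exp, ← Complex.exp_add, real_inner_comm w p]
    push_cast
    ring_nf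
  have hnorm : (-Complex.I) ^ 2 * (‖w‖ : ℂ) ^ 2 / (4 * ((t / 2 : ℝ) : ℂ)) =
      ((-‖w‖ ^ 2 / (2 * t) : ℝ) : ℂ) := by
    push_cast
    rw [neg_sq, Complex.I_sq]
    ring
  have hpow : ((π : ℂ) / ((t / 2 : ℝ) : ℂ)) ^ ((d : ℂ) / 2) =
      (((π / (t / 2)) ^ ((d : ℝ) / 2) : ℝ) : ℂ) := by
    rw [Complex.ofReal_cpow (by positivity)]; push_cast; rfl
  simp only [hexp]
  rw [GaussianFourier.integral_cexp_neg_mul_sq_norm_add (by simpa using ht),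
    finrank_euclideanSpace_fin, hnorm, hpow, ← mul_assoc, ← Complex.ofReal_mul,
    two_div_two_pi_pow_mul_rpow ht, heatKernel, ← Complex.ofReal_exp]
  push_cast
  ring

/-- The left-hand side is the diffusive limit of the momentum integral in
`integral_pathChar_VxyaN`. -/
lemma integral_gaussian_eq_pinnedCharFun {t : ℝ} (ht : 0 < t) (x y : Ed d) {K : ℕ}
    (T : Fin K → ℝ) (ξ : Fin K → Ed d) :
    Complex.exp (Complex.I * (⟪∑ j, ξ j, x⟫ : ℝ)) * (((2 / (2 * π) ^ d : ℝ) : ℂ) *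
      ∫ p : Ed d, Complex.exp (-(Complex.I * (⟪p, y - x⟫ : ℝ))) *
        (Real.exp (-(t / 2 * (‖p‖ ^ 2 + 2 * ⟪p, ∑ j, T j • ξ j⟫ + brownianVariance T ξ))) : ℝ)) =
      2 * pinnedCharFun x y t T ξ := by
  set c : Ed d := ∑ j, T j • ξ j with hc
  set Q : ℝ := brownianVariance T ξ
  have hmean : ∑ j, ⟪ξ j, (1 - T j) • x + T j • y⟫ = ⟪∑ j, ξ j, x⟫ + ⟪c, y - x⟫ := by
    rw [hc, sum_inner, sum_inner, ← Finset.sum_add_distrib]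
    refine Finset.sum_congr rfl fun j _ => ?_
    simp only [inner_add_right, inner_sub_right, real_inner_smul_right, real_inner_smul_left]
    ring
  have hshift : ∀ p : Ed d, Complex.exp (-(Complex.I * (⟪p - c, y - x⟫ : ℝ))) *
      (Real.exp (-(t / 2 * (‖p - c‖ ^ 2 + 2 * ⟪p - c, c⟫ + Q))) : ℝ) =
        Complex.exp ((-(t / 2) * (Q - ‖c‖ ^ 2) : ℝ) + Complex.I * (⟪c, y - x⟫ : ℝ)) *
          (Complex.exp (-(Complex.I * (⟪p, y - x⟫ : ℝ))) *
            (Real.exp (-(t / 2 * ‖p‖ ^ 2)) : ℝ)) := fun p => by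
    have hsq : ‖p - c‖ ^ 2 + 2 * ⟪p - c, c⟫ + Q = ‖p‖ ^ 2 + (Q - ‖c‖ ^ 2) := by
      rw [norm_sub_sq_real, inner_sub_left, real_inner_self_eq_norm_sq]; ring
    rw [hsq, Complex.ofReal_exp, Complex.ofReal_exp, ← Complex.exp_add, ← Complex.exp_add,
      ← Complex.exp_add, inner_sub_left]
    push_cast
    ring_nf
  rw [← integral_sub_right_eq_self _ c]
  simp only [hshift]
  rw [integral_const_mul, mul_left_comm _ (Complex.exp _), integral_cexp_inner_mul_gaussian ht,
    pinnedCharFun, hmean, heatKernel, heatKernel, norm_sub_rev y x, Complex.exp_add,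
    Complex.ofReal_add ⟪∑ j, ξ j, x⟫, mul_add, Complex.exp_add, Complex.exp_add]
  ring

end PinnedGaussian

section DiffusiveScaling

variable {d : ℕ}

/-- A diffusive scaling: lattice spacings `a n → 0`, numbers of steps `N n` with time
`N n * a n ^ 2 / d → t`, and lattice displacements `z n` from `x` to `y` of the right parity. -/
structure DiffusiveScaling (x y : Ed d) (t : ℝ) (a : ℕ → ℝ) (N : ℕ → ℕ)
    (z : ℕ → Fin d → ℤ) : Prop where
  time_pos : 0 < t
  spacing_pos : ∀ n, 0 < a n
  spacing_tendsto : Tendsto a atTop (𝓝 0)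
  time_tendsto : Tendsto (fun n => N n * a n ^ 2 / d) atTop (𝓝 t)
  displacement : ∀ n k, (y - x) k = a n * z n k
  parity : ∀ n, Even ((N n : ℤ) - ∑ k, z n k)

namespace DiffusiveScaling

variable [NeZero d] {x y : Ed d} {t : ℝ} {a : ℕ → ℝ} {N : ℕ → ℕ} {z : ℕ → Fin d → ℤ}

lemma steps_tendsto (h : DiffusiveScaling x y t a N z) : Tendsto N atTop atTop := by
  have hd : (0 : ℝ) < d := Nat.cast_pos.2 (NeZero.pos d)
  have hinv : Tendsto (fun n => (a n ^ 2 / d)⁻¹) atTop atTop := by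
    refine Tendsto.inv_tendsto_nhdsGT_zero (tendsto_nhdsWithin_iff.2 ⟨?_, ?_⟩)
    · simpa using (h.spacing_tendsto.pow 2).div_const (d : ℝ)
    · exact Eventually.of_forall fun n => div_pos (pow_pos (h.spacing_pos n) 2) hd
  rw [← tendsto_natCast_atTop_iff (R := ℝ)]
  refine (h.time_tendsto.pos_mul_atTop h.time_pos hinv).congr fun n => ?_
  have := (h.spacing_pos n).ne'
  field_simp

lemma eventually_abs_prod_meanCos_le (h : DiffusiveScaling x y t a N z) {B : ℝ}
    {c : ∀ n, Fin (N n) → Ed d} (hc : ∀ n i, ‖c n i‖ ≤ B) :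
    ∀ᶠ n in atTop, ∀ p, a n • p ∈ halfZone d → |∏ i, meanCos (a n • (p + c n i))| ≤
      Real.exp (cosRate d * (2 * t * d) * B ^ 2) *
        Real.exp (-(cosRate d * (t * d / 2) / 2) * ‖p‖ ^ 2) := by
  have hd : (0 : ℝ) < d := Nat.cast_pos.2 (NeZero.pos d)
  have ht := h.time_pos
  have haB : Tendsto (fun n => |a n| * B) atTop (𝓝 0) := by
    simpa using h.spacing_tendsto.abs.mul_const B
  filter_upwards [haB.eventually_le_const (by positivity : 0 < π / 6),
    h.time_tendsto.eventually_lt_const (by linarith : t < 2 * t),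
    h.time_tendsto.eventually_const_lt (by linarith : t / 2 < t)] with n hn hupper hlower p hp
  rw [div_lt_iff₀ hd] at hupper
  rw [lt_div_iff₀ hd] at hlower
  refine (abs_prod_meanCos_le hn hp (hc n)).trans ?_
  rw [← Real.exp_add, Real.exp_le_exp]
  have hB := mul_le_mul_of_nonneg_left hupper.le
    (mul_nonneg (cosRate_pos (d := d)).le (sq_nonneg B))
  have hp := mul_le_mul_of_nonneg_left hlower.le
    (mul_nonneg (cosRate_pos (d := d)).le (sq_nonneg ‖p‖))
  linarith

lemma tendsto_integral_pathChar (h : DiffusiveScaling x y t a N z) {K : ℕ} {T : Fin K → ℝ}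
    (hT : ∀ j, T j ∈ Icc (0 : ℝ) 1) (ξ : Fin K → Ed d) :
    Tendsto (fun n => ∫ ω, pathChar T ξ ω.1 ∂(VxyaN x y (a n) (N n))) atTop
      (𝓝 (2 * pinnedCharFun x y t T ξ)) := by
  have hd : (0 : ℝ) < d := Nat.cast_pos.2 (NeZero.pos d)
  have ht := h.time_pos
  have hκ := cosRate_pos (d := d)
  have hphase : ∀ p : Ed d, ‖Complex.exp (-(Complex.I * (⟪p, y - x⟫ : ℝ)))‖ = 1 := fun p => by
    rw [← mul_neg, mul_comm, ← Complex.ofReal_neg, Complex.norm_exp_ofReal_mul_I]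
  simp_rw [fun n => integral_pathChar_VxyaN (h.spacing_pos n) (h.displacement n) (h.parity n) hT ξ,
    ← integral_gaussian_eq_pinnedCharFun ht x y T ξ]
  refine Tendsto.const_mul _ (Tendsto.const_mul _ ?_)
  refine tendsto_integral_filter_of_dominated_convergence
    (fun p => Real.exp (cosRate d * (2 * t * d) * (∑ j, ‖ξ j‖) ^ 2) *
      Real.exp (-(cosRate d * (t * d / 2) / 2) * ‖p‖ ^ 2))
    (Eventually.of_forall fun n => ?_) ?_
    ((integrable_exp_neg_mul_norm_sq (by positivity)).const_mul _)
    (Eventually.of_forall fun p => ?_)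
  · refine (Continuous.aestronglyMeasurable ?_).indicator
      (measurable_const_smul (a n) (measurableSet_centeredBox _))
    simp only [meanCos, Fintype.expect_eq_sum_div_card]
    fun_prop
  · filter_upwards [h.eventually_abs_prod_meanCos_le fun n i => norm_stepFreq_le T ξ (N n) i]
      with n hn
    refine Eventually.of_forall fun p => ?_
    by_cases hp : p ∈ (a n • ·) ⁻¹' halfZone d
    · rw [indicator_of_mem hp, norm_mul, hphase, one_mul, Complex.norm_real]
      exact hn p hp
    · rw [indicator_of_notMem hp, norm_zero]
      positivity
  · have hprod := tendsto_prod_meanCos h.spacing_tendsto h.time_tendsto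
      (u := fun n i => p + stepFreq T ξ (N n) i)
      (B := ‖p‖ + ∑ j, ‖ξ j‖)
      (fun n i => (norm_add_le _ _).trans (by gcongr; exact norm_stepFreq_le T ξ (N n) i))
      ((tendsto_sum_norm_add_stepFreq_sq hT ξ p).comp h.steps_tendsto)
    refine (((Complex.continuous_ofReal.tendsto _).comp hprod).const_mul _).congr' ?_
    filter_upwards [eventually_smul_mem_halfZone h.spacing_tendsto p] with n hn
    symm
    exact indicator_of_mem (s := (a n • ·) ⁻¹' halfZone d) hn _

end DiffusiveScaling

end DiffusiveScaling

/-! ### Interpolation on a time grid -/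

section Interpolation

variable {d : ℕ} {x y : Ed d} {K : ℕ}

lemma exists_nat_le_le_add_one {r : ℝ} {lo hi : ℕ} (hlt : lo < hi) (hlo : lo ≤ r) (hhi : r ≤ hi) :
    ∃ n, lo ≤ n ∧ n < hi ∧ (n : ℝ) ≤ r ∧ r ≤ n + 1 := by
  have hr : 0 ≤ r := (Nat.cast_nonneg lo).trans hlo
  by_cases h : ⌊r⌋₊ < hi
  · exact ⟨⌊r⌋₊, Nat.le_floor hlo, h, Nat.floor_le hr, (Nat.lt_floor_add_one r).le⟩
  · obtain rfl : r = hi := hhi.antisymm ((Nat.le_floor_iff hr).1 (not_lt.1 h))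
    obtain ⟨n, rfl⟩ := Nat.exists_eq_add_one_of_ne_zero (by omega : hi ≠ 0)
    exact ⟨n, by omega, by omega, by simp, by simp⟩

lemma pwLinE_apply_of_mem {N n : ℕ} (x : Ed d) (v : Fin N → Ed d) {t : unitInterval}
    (h₁ : (n : ℝ) ≤ N * t) (h₂ : N * (t : ℝ) ≤ n + 1) :
    pwLinE x N v t =
      x + (prefixSum v n + (N * (t : ℝ) - n) • (prefixSum v (n + 1) - prefixSum v n)) := by
  change x + ∑ i : Fin N, clamp01 (N * (t : ℝ) - (i : ℕ)) • v i = _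
  simp only [prefixSum, ← Finset.sum_sub_distrib, Finset.smul_sum, ← Finset.sum_add_distrib]
  congr 1
  refine Finset.sum_congr rfl fun i _ => ?_
  rcases lt_trichotomy (i : ℕ) n with h | h | h
  · have h' : ((i : ℕ) : ℝ) + 1 ≤ n := by exact_mod_cast h
    rw [clamp01_of_one_le (by linarith), if_pos h, if_pos (by omega)]
    simp
  · rw [if_neg (by omega), if_pos (by omega), h, clamp01, max_eq_right (by linarith),
      min_eq_right (by linarith)]
    simp
  · have h' : (n : ℝ) + 1 ≤ ((i : ℕ) : ℝ) := by exact_mod_cast h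
    rw [clamp01_of_nonpos (by linarith), if_neg (by omega), if_neg (by omega)]
    simp

lemma norm_pwLinE_sub_le {N lo hi : ℕ} (x c : Ed d) (v : Fin N → Ed d) {t : unitInterval} {δ : ℝ}
    (hlt : lo < hi) (hlo : (lo : ℝ) ≤ N * t) (hhi : N * (t : ℝ) ≤ hi)
    (hδ : ∀ n, lo ≤ n → n ≤ hi → ‖x + prefixSum v n - c‖ ≤ δ) : ‖pwLinE x N v t - c‖ ≤ δ := by
  obtain ⟨n, hlon, hnhi, hn, hn'⟩ := exists_nat_le_le_add_one hlt hlo hhi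
  have hconv := (convex_closedBall c δ).add_smul_sub_mem
    (mem_closedBall_iff_norm.2 (hδ n hlon hnhi.le))
    (mem_closedBall_iff_norm.2 (hδ (n + 1) (by omega) hnhi))
    (t := N * t - n) ⟨by linarith, by linarith⟩
  rwa [mem_closedBall_iff_norm, add_sub_add_left_eq_sub, add_assoc,
    ← pwLinE_apply_of_mem x v hn hn'] at hconv

/-- The path from `x` to `y` through the points `vs` at the times `(i + 1) / (K + 1)`, interpolated
linearly. -/
def interpolate (x y : Ed d) (vs : Fin K → Ed d) : Omega2 x y :=
  pwLin2 x y (K + 1) (fun i => pinPts x y vs ((i : ℕ) + 1) - pinPts x y vs (i : ℕ))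
    (pin_telescope x y vs)

/-- The interior points `(i + 1) / (K + 1)` of the uniform grid with `K + 1` cells. -/
def gridTime (K : ℕ) (i : Fin K) : ℝ := ((i : ℕ) + 1) / (K + 1)

/-- The values of a path at the grid times. -/
def gridValues (K : ℕ) (ω : PathSp d) (i : Fin K) : Ed d := evalAt ω (gridTime K i)

lemma continuous_pinPts (x y : Ed d) (j : ℕ) :
    Continuous fun vs : Fin K → Ed d => pinPts x y vs j := by
  unfold pinPts
  split_ifs <;> fun_prop

lemma continuous_interpolate (x y : Ed d) (K : ℕ) :
    Continuous (interpolate x y : (Fin K → Ed d) → Omega2 x y) := by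
  refine Continuous.subtype_mk (ContinuousMap.continuous_of_continuous_uncurry _ ?_) _
  refine continuous_const.add (continuous_finsetSum _ fun i _ => ?_)
  have hclamp : Continuous fun q : (Fin K → Ed d) × unitInterval =>
      clamp01 ((K + 1 : ℕ) * (q.2 : ℝ) - (i : ℕ)) := clamp01_continuous.comp (by fun_prop)
  exact hclamp.smul (((continuous_pinPts x y _).sub (continuous_pinPts x y _)).comp continuous_fst)

lemma continuous_gridValues (K : ℕ) : Continuous (gridValues K : PathSp d → Fin K → Ed d) :=
  continuous_pi fun _ => continuous_eval_const (F := PathSp d) _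

lemma natCast_div_mem_Icc {j : ℕ} (hj : j ≤ K + 1) : (j : ℝ) / (K + 1) ∈ Icc (0 : ℝ) 1 :=
  ⟨by positivity, (div_le_one (by positivity)).2 (by exact_mod_cast hj)⟩

lemma gridTime_mem_Icc (i : Fin K) : gridTime K i ∈ Icc (0 : ℝ) 1 := by
  simpa [gridTime] using natCast_div_mem_Icc (K := K) (j := i + 1) (by omega)

lemma pinPts_gridValues (ω : Omega2 x y) {n : ℕ} (hn : n ≤ K + 1) :
    pinPts x y (gridValues K ω.1) n = ω.1 ⟨n / (K + 1), natCast_div_mem_Icc hn⟩ := by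
  unfold pinPts
  split_ifs with hn0 hnK
  · subst hn0
    refine ω.2.1.symm.trans (congrArg ω.1 (Subtype.ext ?_))
    simp
  · rw [gridValues, evalAt, ← projIcc_of_mem zero_le_one]
    congr 3
    rw [gridTime, Nat.cast_sub (by omega), Nat.cast_one, sub_add_cancel]
  · obtain rfl : n = K + 1 := by omega
    refine ω.2.2.symm.trans (congrArg ω.1 (Subtype.ext ?_))
    push_cast
    exact (div_self (by positivity)).symm

/-- Both `ω` and its interpolation stay within `δ` of `c j` on the `j`-th time block. -/
lemma dist_interpolate_gridValues_le (ω : Omega2 x y) {c : ℕ → Ed d} {δ : ℝ}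
    (hδ : ∀ j < K + 1, ∀ s : unitInterval, (j : ℝ) ≤ (K + 1) * s → (K + 1) * (s : ℝ) ≤ j + 1 →
      ‖ω.1 s - c j‖ ≤ δ) :
    dist ω (interpolate x y (gridValues K ω.1)) ≤ 2 * δ := by
  have hK : (0 : ℝ) < K + 1 := by positivity
  have hδ0 : 0 ≤ δ := (norm_nonneg _).trans (hδ 0 K.succ_pos 0 (by simp) (by simp))
  rw [Subtype.dist_eq, ContinuousMap.dist_le (by positivity)]
  intro s
  obtain ⟨j, -, hj, hjs, hsj⟩ := exists_nat_le_le_add_one (r := (K + 1) * s) K.succ_pos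
    (by rw [Nat.cast_zero]; exact mul_nonneg hK.le s.2.1)
    (by push_cast; exact mul_le_of_le_one_right hK.le s.2.2)
  have hgrid : ∀ n, j ≤ n → n ≤ j + 1 → ‖x + prefixSum (fun i : Fin (K + 1) =>
      pinPts x y (gridValues K ω.1) ((i : ℕ) + 1) - pinPts x y (gridValues K ω.1) (i : ℕ)) n -
        c j‖ ≤ δ := fun n hjn hnj => by
    rw [prefixSum_sub _ (by omega), pinPts_zero, add_sub_cancel, pinPts_gridValues ω (by omega)]
    refine hδ j hj _ ?_ ?_ <;> simp only [mul_div_cancel₀ _ hK.ne'] <;> exact_mod_cast ‹_›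
  have hinterp : ‖(interpolate x y (gridValues K ω.1)).1 s - c j‖ ≤ δ :=
    norm_pwLinE_sub_le x _ _ j.lt_succ_self (by push_cast; exact hjs) (by push_cast; exact hsj)
      hgrid
  calc dist (ω.1 s) ((interpolate x y (gridValues K ω.1)).1 s)
      ≤ dist (ω.1 s) (c j) + dist ((interpolate x y (gridValues K ω.1)).1 s) (c j) :=
        dist_triangle_right _ _ _
    _ ≤ δ + δ := by
        rw [dist_eq_norm, dist_eq_norm]
        exact add_le_add (hδ j hj s hjs hsj) hinterp
    _ = _ := (two_mul δ).symm

lemma tendsto_interpolate_gridValues (ω : Omega2 x y) :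
    Tendsto (fun K : ℕ => interpolate x y (gridValues K ω.1)) atTop (𝓝 ω) := by
  rw [Metric.tendsto_atTop]
  intro ε hε
  obtain ⟨η, hη, hω⟩ := Metric.uniformContinuous_iff.1
    (CompactSpace.uniformContinuous_of_continuous ω.1.continuous) (ε / 4) (by positivity)
  obtain ⟨K₀, hK₀⟩ := exists_nat_one_div_lt hη
  refine ⟨K₀, fun K hK => ?_⟩
  have hKpos : (0 : ℝ) < K + 1 := by positivity
  rw [dist_comm]
  refine (dist_interpolate_gridValues_le (c := fun j => evalAt ω.1 (j / (K + 1))) (δ := ε / 4) ω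
    fun j hj s hjs hsj => ?_).trans_lt (by linarith)
  rw [evalAt, projIcc_of_mem _ (natCast_div_mem_Icc hj.le), ← dist_eq_norm]
  refine (hω ?_).le
  have hdist : dist (s : ℝ) (j / (K + 1)) = ((K + 1) * s - j) / (K + 1) := by
    rw [Real.dist_eq, ← abs_of_nonneg (div_nonneg (sub_nonneg.2 hjs) hKpos.le)]
    congr 1
    field_simp
  calc dist (s : ℝ) (j / (K + 1)) = ((K + 1) * s - j) / (K + 1) := hdist
    _ ≤ 1 / (K₀ + 1) := by gcongr; linarith
    _ < η := hK₀

end Interpolation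

section InterpolationError

variable {d N K : ℕ} {x y : Ed d} {a : ℝ}

/-- The number of steps completed at time `j / (K + 1)`. -/
def blockStart (N : ℕ) (j : Fin (K + 1)) : ℕ := ⌊N * ((j : ℕ) / (K + 1) : ℝ)⌋₊

/-- The number of steps started before time `(j + 1) / (K + 1)`. -/
def blockEnd (N : ℕ) (j : Fin (K + 1)) : ℕ := ⌈N * (((j : ℕ) + 1) / (K + 1) : ℝ)⌉₊

lemma blockEnd_le (N : ℕ) (j : Fin (K + 1)) : blockEnd N j ≤ N := by
  refine Nat.ceil_le.2 (mul_le_of_le_one_right N.cast_nonneg ?_)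
  exact_mod_cast (natCast_div_mem_Icc (K := K) (j := j + 1) (by omega)).2

lemma blockStart_lt_blockEnd (hN : 0 < N) (j : Fin (K + 1)) : blockStart N j < blockEnd N j := by
  have : (0 : ℝ) < N := Nat.cast_pos.2 hN
  rw [← Nat.cast_lt (α := ℝ)]
  calc (blockStart N j : ℝ) ≤ N * ((j : ℕ) / (K + 1)) := Nat.floor_le (by positivity)
    _ < N * (((j : ℕ) + 1) / (K + 1)) := by gcongr; linarith
    _ ≤ blockEnd N j := Nat.le_ceil _

lemma blockEnd_sub_blockStart_le (hNK : 2 * (K + 1) ≤ N) (j : Fin (K + 1)) :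
    ((blockEnd N j - blockStart N j : ℕ) : ℝ) ≤ 2 * N / (K + 1) := by
  have hK : (0 : ℝ) < K + 1 := by positivity
  have hend : (blockEnd N j : ℝ) < N * (((j : ℕ) + 1) / (K + 1)) + 1 :=
    Nat.ceil_lt_add_one (by positivity)
  have hstart : N * ((j : ℕ) / (K + 1)) < (blockStart N j : ℝ) + 1 := Nat.lt_floor_add_one _
  have htwo : (2 : ℝ) ≤ N / (K + 1) := by rw [le_div_iff₀ hK]; exact_mod_cast hNK
  rw [Nat.cast_sub (blockStart_lt_blockEnd (by omega) j).le, mul_div_assoc]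
  rw [add_div, mul_add, mul_one_div] at hend
  linarith

/-- The steps taken during the `j`-th time block `[j / (K + 1), (j + 1) / (K + 1)]`. -/
def blockStep (N : ℕ) (j : Fin (K + 1)) (l : Fin (blockEnd N j - blockStart N j)) : Fin N :=
  ⟨blockStart N j + l, by have := blockEnd_le N j; omega⟩

lemma blockStep_injective (N : ℕ) (j : Fin (K + 1)) : Function.Injective (blockStep N j) :=
  fun _ _ h => Fin.ext (Nat.add_left_cancel (congrArg Fin.val h))

lemma norm_le_of_forall_abs_le {v : Ed d} {r : ℝ} (h : ∀ k, |v k| ≤ r) : ‖v‖ ≤ d * r := by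
  have hv := (EuclideanSpace.basisFun (Fin d) ℝ).sum_repr v
  calc ‖v‖ = ‖∑ k, v k • EuclideanSpace.basisFun (Fin d) ℝ k‖ := congrArg norm hv.symm
    _ ≤ ∑ _k : Fin d, r := norm_sum_le_of_le _ fun k _ => by simpa [norm_smul] using h k
    _ = d * r := by simp

lemma norm_prefixSum_stepVec_le {M n : ℕ} {R : ℝ} (ha : 0 ≤ a) {u : Fin M → Fin d × Bool}
    (hu : u ∉ largeExcursion d M R) (hn : n ≤ M) :
    ‖prefixSum (fun i => stepVec a (u i)) n‖ ≤ d * (a * R) := by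
  refine norm_le_of_forall_abs_le fun k => ?_
  have hcoord : prefixSum (fun i => stepVec a (u i)) n k =
      a * (prefixSum (fun i => latStep (u i)) n k : ℝ) := by
    simp only [prefixSum, WithLp.ofLp_sum, Finset.sum_apply, Int.cast_sum, Finset.mul_sum]
    refine Finset.sum_congr rfl fun i _ => ?_
    split_ifs <;> simp [stepVec_apply]
  rw [hcoord, abs_mul, abs_of_nonneg ha]
  gcongr
  by_contra! hlarge
  exact hu ⟨n, hn, k, hlarge.le⟩

lemma dist_interpolate_lattice_le (ha : 0 ≤ a) (hN : 0 < N) {R : ℝ} {s : Fin N → Fin d × Bool}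
    (hs : x + ∑ i, stepVec a (s i) = y)
    (hR : ∀ j : Fin (K + 1), s ∘ blockStep N j ∉ largeExcursion d _ R) :
    dist (pwLin2 x y N (fun i => stepVec a (s i)) hs)
      (interpolate x y (gridValues K (pwLin2 x y N (fun i => stepVec a (s i)) hs).1)) ≤
      2 * (d * (a * R)) := by
  have hK : (0 : ℝ) < K + 1 := by positivity
  refine dist_interpolate_gridValues_le _ (c := fun j =>
    x + prefixSum (fun i => stepVec a (s i)) (blockStart N (Fin.ofNat (K + 1) j)))
    fun j hj t hjt htj => ?_
  obtain ⟨j, rfl⟩ : ∃ i : Fin (K + 1), i = j := ⟨⟨j, hj⟩, rfl⟩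
  rw [Fin.ofNat_val_eq_self]
  refine norm_pwLinE_sub_le x _ _ (blockStart_lt_blockEnd hN j) ?_ ?_ fun n hlo hhi => ?_
  · exact (Nat.floor_le (by positivity)).trans
      (mul_le_mul_of_nonneg_left ((div_le_iff₀' hK).2 hjt) N.cast_nonneg)
  · exact (mul_le_mul_of_nonneg_left ((le_div_iff₀' hK).2 htj) N.cast_nonneg).trans (Nat.le_ceil _)
  · rw [prefixSum_eq_add_prefixSum _ (blockEnd_le N j) hlo hhi, add_sub_add_left_eq_sub,
      add_sub_cancel_left]
    exact norm_prefixSum_stepVec_le ha (hR j) (by omega)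

lemma freq_pinned_largeExcursion_le [NeZero d] {R : ℝ} (hR : 0 ≤ R) (hK : 3 ≤ K)
    (hNK : 2 * (K + 1) ≤ N) (j : Fin (K + 1)) (z : Fin d → ℤ) :
    freq {s : Fin N → Fin d × Bool |
        ∑ i, latStep (s i) = z ∧ s ∘ blockStep N j ∈ largeExcursion d _ R} ≤
      2 * d * localLimitConst d * (((N : ℝ) / 2) ^ (-(d : ℝ) / 2) *
        Real.exp (-(R ^ 2 * (K + 1) / (4 * N)))) := by
  have hN : (0 : ℝ) < N := Nat.cast_pos.2 (by omega)
  have hC := localLimitConst_nonneg (d := d)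
  have hlen := blockEnd_sub_blockStart_le hNK j
  set M := blockEnd N j - blockStart N j
  have hhalf : (N : ℝ) / 2 ≤ ((N - M : ℕ) : ℝ) + 1 := by
    have hMN : M ≤ N := (Nat.sub_le _ _).trans (blockEnd_le N j)
    have hquarter : 2 * (N : ℝ) / (K + 1) ≤ N / 2 := by
      rw [div_le_div_iff₀ (by positivity) two_pos]
      have : (3 : ℝ) ≤ K := by exact_mod_cast hK
      nlinarith
    rw [Nat.cast_sub hMN]
    linarith
  calc _ ≤ freq (largeExcursion d M R) *
          (localLimitConst d * (((N - M : ℕ) : ℝ) + 1) ^ (-(d : ℝ) / 2)) :=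
        freq_sum_latStep_eq_inter_le (blockStep_injective N j) _ z
    _ ≤ (2 * d * Real.exp (-(R ^ 2 / (2 * (2 * N / (K + 1)))))) *
          (localLimitConst d * ((N : ℝ) / 2) ^ (-(d : ℝ) / 2)) := by
        refine mul_le_mul (freq_largeExcursion_le hR (by positivity) hlen)
          (mul_le_mul_of_nonneg_left (Real.rpow_le_rpow_of_nonpos (by positivity) hhalf ?_) hC)
          (by positivity) (by positivity)
        linarith [(Nat.cast_nonneg d : (0 : ℝ) ≤ d)]
    _ = _ := by
        rw [(by field_simp; ring : R ^ 2 / (2 * (2 * N / (K + 1))) = R ^ 2 * (K + 1) / (4 * N))]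
        ring

lemma VxyaN_real_le [NeZero d] (ha : 0 < a) {z : Fin d → ℤ} (hz : ∀ k, (y - x) k = a * z k)
    {S : Set (Omega2 x y)} (hS : MeasurableSet S) {E : Set (Fin N → Fin d × Bool)}
    (hSE : ∀ s hs, pwLin2 x y N (fun i => stepVec a (s i)) hs ∈ S → s ∈ E) :
    (VxyaN x y a N).real S ≤
      a ^ (-(d : ℝ)) * freq {s : Fin N → Fin d × Bool | ∑ i, latStep (s i) = z ∧ s ∈ E} := by
  classical
  have hreal : (VxyaN x y a N).real S =
      ∫ ω, (Subtype.val '' S).indicator (1 : PathSp d → ℝ) ω.1 ∂(VxyaN x y a N) := by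
    simp only [← integral_indicator_one hS, indicator_apply, Subtype.val_injective.mem_set_image,
      Pi.one_apply]
  rw [hreal, integral_VxyaN ha hz, smul_eq_mul, freq]
  refine mul_le_mul_of_nonneg_left (Finset.expect_le_expect fun s _ => ?_) (by positivity)
  have hE (hs : ∑ i, latStep (s i) = z)
      (h : pwLinE x N (fun i => stepVec a (s i)) ∈ Subtype.val '' S) : s ∈ E :=
    hSE s ((sum_stepVec_eq_iff ha.ne' hz s).2 hs) (Subtype.val_injective.mem_set_image.1 h)
  simp only [indicator_apply, mem_ofPred_eq, Pi.one_apply]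
  split_ifs <;> first | exact le_rfl | exact zero_le_one | tauto

lemma VxyaN_interpolation_error_le [NeZero d] (ha : 0 < a) {z : Fin d → ℤ}
    (hz : ∀ k, (y - x) k = a * z k) (hK : 3 ≤ K) (hNK : 2 * (K + 1) ≤ N) {ε : ℝ} (hε : 0 < ε) :
    (VxyaN x y a N).real {ω | ε < dist ω (interpolate x y (gridValues K ω.1))} ≤
      (K + 1) * (2 * d * localLimitConst d * ((N * a ^ 2 / 2) ^ (-(d : ℝ) / 2) *
        Real.exp (-(ε ^ 2 * (K + 1) / (16 * d ^ 2 * (N * a ^ 2)))))) := by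
  have hd : (0 : ℝ) < d := Nat.cast_pos.2 (NeZero.pos d)
  set R := ε / (2 * d * a) with hR
  have hopen : IsOpen {ω : Omega2 x y | ε < dist ω (interpolate x y (gridValues K ω.1))} :=
    isOpen_lt continuous_const (continuous_id.dist ((continuous_interpolate x y K).comp
      ((continuous_gridValues K).comp continuous_subtype_val)))
  calc _ ≤ a ^ (-(d : ℝ)) * freq {s : Fin N → Fin d × Bool | ∑ i, latStep (s i) = z ∧
          s ∈ ⋃ j : Fin (K + 1), {s | s ∘ blockStep N j ∈ largeExcursion d _ R}} := by
        refine VxyaN_real_le ha hz hopen.measurableSet fun s hs hdist => ?_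
        by_contra hsmall
        simp only [mem_iUnion, mem_ofPred_eq, not_exists] at hsmall
        refine (dist_interpolate_lattice_le ha.le (by omega) hs hsmall).not_gt
          (lt_of_eq_of_lt ?_ hdist)
        rw [hR]
        field_simp
    _ ≤ a ^ (-(d : ℝ)) * ∑ _j : Fin (K + 1), 2 * d * localLimitConst d *
          (((N : ℝ) / 2) ^ (-(d : ℝ) / 2) * Real.exp (-(R ^ 2 * (K + 1) / (4 * N)))) := by
        refine mul_le_mul_of_nonneg_left ?_ (by positivity)
        rw [ofPred_and, ofPred_mem_eq, inter_iUnion]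
        exact (freq_iUnion_le _).trans (Finset.sum_le_sum fun j _ =>
          freq_pinned_largeExcursion_le (by positivity) hK hNK j z)
    _ = _ := by
        have hN : (0 : ℝ) < N := Nat.cast_pos.2 (by omega)
        have hexp : R ^ 2 * (K + 1) / (4 * N) = ε ^ 2 * (K + 1) / (16 * d ^ 2 * (N * a ^ 2)) := by
          rw [hR]
          field_simp
          ring
        rw [hexp, (by ring : N * a ^ 2 / 2 = a ^ 2 * ((N : ℝ) / 2)),
          ← rpow_neg_mul_rpow_neg_half ha (by positivity : 0 ≤ (N : ℝ) / 2) d]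
        simp only [Finset.sum_const, Finset.card_univ, Fintype.card_fin, nsmul_eq_mul]
        push_cast
        ring

lemma DiffusiveScaling.eventually_interpolation_error_le [NeZero d] {t : ℝ} {a : ℕ → ℝ}
    {N : ℕ → ℕ} {z : ℕ → Fin d → ℤ} (h : DiffusiveScaling x y t a N z) {ε η : ℝ} (hε : 0 < ε)
    (hη : 0 < η) : ∀ᶠ K in atTop, ∀ᶠ n in atTop,
      (VxyaN x y (a n) (N n)).real {ω | ε < dist ω (interpolate x y (gridValues K ω.1))} ≤ η := by
  have hd : (0 : ℝ) < d := Nat.cast_pos.2 (NeZero.pos d)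
  have htd : 0 < t * d := mul_pos h.time_pos hd
  let bound (u L : ℝ) : ℝ := L * (2 * d * localLimitConst d * ((u / 2) ^ (-(d : ℝ) / 2) *
    Real.exp (-(ε ^ 2 * L / (16 * d ^ 2 * u)))))
  have hbound : Tendsto (bound (t * d)) atTop (𝓝 0) := by
    have hb : 0 < ε ^ 2 / (16 * d ^ 2 * (t * d)) := by positivity
    have hlim := (tendsto_rpow_mul_exp_neg_mul_atTop_nhds_zero 1 _ hb).const_mul
      (2 * d * localLimitConst d * (t * d / 2) ^ (-(d : ℝ) / 2))
    rw [mul_zero] at hlim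
    refine hlim.congr fun L => ?_
    rw [rpow_one, neg_mul, div_mul_eq_mul_div]
    ring
  have hK := (tendsto_natCast_atTop_atTop (R := ℝ)).atTop_add (tendsto_const_nhds (x := (1 : ℝ)))
  filter_upwards [(hbound.comp hK).eventually_lt_const hη, eventually_ge_atTop 3] with K hKη hK3
  have hu : Tendsto (fun n => N n * a n ^ 2) atTop (𝓝 (t * d)) :=
    (h.time_tendsto.mul_const (d : ℝ)).congr fun n => div_mul_cancel₀ _ hd.ne'
  have hcont : ContinuousAt (bound · (K + 1)) (t * d) := by
    refine continuousAt_const.mul (continuousAt_const.mul (ContinuousAt.mul ?_ ?_))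
    · exact (continuousAt_id.div_const 2).rpow_const (Or.inl (by positivity))
    · fun_prop (disch := positivity)
  filter_upwards [(hcont.tendsto.comp hu).eventually_lt_const hKη,
    h.steps_tendsto.eventually_ge_atTop (2 * (K + 1))] with n hnη hnK
  exact (VxyaN_interpolation_error_le (h.spacing_pos n) (h.displacement n) hK3 hnK hε).trans hnη.le

end InterpolationError

/-! ### Weak convergence at a fixed time -/

section WeakConvergence

variable {Ω : Type*} [MeasurableSpace Ω]

lemma tendsto_integral_normalize [Nonempty Ω] {F : Type*} [NormedAddCommGroup F] [NormedSpace ℝ F]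
    {μ : ℕ → FiniteMeasure Ω} {ν : FiniteMeasure Ω} (hν : ν ≠ 0)
    (hmass : Tendsto (fun n => (μ n).mass) atTop (𝓝 ν.mass)) {g : Ω → F}
    (hg : Tendsto (fun n => ∫ ω, g ω ∂(μ n : Measure Ω)) atTop (𝓝 (∫ ω, g ω ∂(ν : Measure Ω)))) :
    Tendsto (fun n => ∫ ω, g ω ∂((μ n).normalize : Measure Ω)) atTop
      (𝓝 (∫ ω, g ω ∂(ν.normalize : Measure Ω))) := by
  have integral_normalize {ρ : FiniteMeasure Ω} (hρ : ρ.mass ≠ 0) :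
      ∫ ω, g ω ∂(ρ.normalize : Measure Ω) = (ρ.mass : ℝ)⁻¹ • ∫ ω, g ω ∂(ρ : Measure Ω) := by
    rw [← ρ.average_eq_integral_normalize (ρ.mass_nonzero_iff.1 hρ), average_eq]
    rfl
  have hν : ν.mass ≠ 0 := ν.mass_nonzero_iff.2 hν
  have hinv : Tendsto (fun n => ((μ n).mass : ℝ)⁻¹) atTop (𝓝 (ν.mass : ℝ)⁻¹) :=
    (NNReal.tendsto_coe.2 hmass).inv₀ (NNReal.coe_ne_zero.2 hν)
  rw [integral_normalize hν]
  refine (hinv.smul hg).congr' ?_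
  filter_upwards [hmass.eventually_ne hν] with n hn
  rw [integral_normalize hn]

variable {μ : ℕ → FiniteMeasure Ω} {ν : FiniteMeasure Ω}

lemma tendsto_finiteMeasure_of_tendsto_charFun {E : Type*} [NormedAddCommGroup E]
    [InnerProductSpace ℝ E] [FiniteDimensional ℝ E] [MeasurableSpace E] [BorelSpace E]
    {μ : ℕ → FiniteMeasure E} {ν : FiniteMeasure E}
    (h : ∀ ξ, Tendsto (fun n => charFun (μ n : Measure E) ξ) atTop
      (𝓝 (charFun (ν : Measure E) ξ))) :
    Tendsto μ atTop (𝓝 ν) := by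
  have hmass : Tendsto (fun n => (μ n).mass) atTop (𝓝 ν.mass) := by
    have hzero := (Complex.continuous_re.tendsto _).comp (h 0)
    simp only [Function.comp_def, charFun_zero, Complex.ofReal_re] at hzero
    exact NNReal.tendsto_coe.1 hzero
  rcases eq_or_ne ν 0 with rfl | hν
  · exact FiniteMeasure.tendsto_zero_of_tendsto_zero_mass hmass
  refine (FiniteMeasure.tendsto_normalize_iff_tendsto hν).1 ⟨?_, hmass⟩
  refine ProbabilityMeasure.tendsto_of_tendsto_charFun fun ξ => ?_
  simp only [charFun_apply] at h ⊢
  exact tendsto_integral_normalize hν hmass (h ξ)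

lemma tendsto_finiteMeasure_of_forall_lipschitz [Nonempty Ω] [PseudoEMetricSpace Ω]
    [OpensMeasurableSpace Ω]
    (h : ∀ f : Ω → ℝ, (∃ C : ℝ, ∀ ω ω', dist (f ω) (f ω') ≤ C) → (∃ L, LipschitzWith L f) →
      Tendsto (fun n => ∫ ω, f ω ∂(μ n : Measure Ω)) atTop (𝓝 (∫ ω, f ω ∂(ν : Measure Ω)))) :
    Tendsto μ atTop (𝓝 ν) := by
  have hmass : Tendsto (fun n => (μ n).mass) atTop (𝓝 ν.mass) := by
    have hone := h (fun _ => 1) ⟨0, by simp⟩ ⟨0, LipschitzWith.const 1⟩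
    simp only [integral_const, smul_eq_mul, mul_one] at hone
    exact NNReal.tendsto_coe.1 hone
  rcases eq_or_ne ν 0 with rfl | hν
  · exact FiniteMeasure.tendsto_zero_of_tendsto_zero_mass hmass
  refine (FiniteMeasure.tendsto_normalize_iff_tendsto hν).1 ⟨?_, hmass⟩
  refine tendsto_iff_forall_lipschitz_integral_tendsto.2 fun f hb hl => ?_
  exact tendsto_integral_normalize hν hmass (h f hb hl)

variable [PseudoMetricSpace Ω] [OpensMeasurableSpace Ω]

lemma abs_integral_sub_integral_comp_le (μ : Measure Ω) [IsFiniteMeasure μ]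
    {f : BoundedContinuousFunction Ω ℝ} {C : ℝ} (hC : ∀ ω ω', dist (f ω) (f ω') ≤ C)
    {L : NNReal} (hL : LipschitzWith L f) {P : Ω → Ω} (hP : Continuous P) {ε : ℝ} (hε : 0 ≤ ε) :
    |∫ ω, f ω ∂μ - ∫ ω, f (P ω) ∂μ| ≤
      L * ε * μ.real univ + C * μ.real {ω | ε < dist ω (P ω)} := by
  set S := {ω | ε < dist ω (P ω)}
  have hmeas : MeasurableSet S := (isOpen_lt continuous_const (continuous_id.dist hP)).measurableSet
  have hf := f.integrable μ
  have hfP : Integrable (fun ω => f (P ω)) μ := (f.compContinuous ⟨P, hP⟩).integrable μ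
  have hind : Integrable (S.indicator fun _ => C) μ := (integrable_const C).indicator hmeas
  rw [← integral_sub hf hfP]
  calc _ ≤ ∫ ω, |f ω - f (P ω)| ∂μ := abs_integral_le_integral_abs
    _ ≤ ∫ ω, (L * ε + S.indicator (fun _ => C) ω) ∂μ := by
        refine integral_mono (hf.sub hfP).abs ((integrable_const _).add hind) fun ω => ?_
        rw [← Real.dist_eq]
        by_cases hω : ω ∈ S
        · rw [indicator_of_mem hω]
          exact (hC _ _).trans (le_add_of_nonneg_left (by positivity))
        · rw [indicator_of_notMem hω, add_zero]
          exact (hL.dist_le_mul _ _).trans (mul_le_mul_of_nonneg_left (not_lt.1 hω) L.2)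
    _ = _ := by
        rw [integral_add (integrable_const _) hind, integral_indicator_const _ hmeas,
          integral_const, smul_eq_mul, smul_eq_mul]
        ring

/-- Weak convergence follows from that of the images under maps `P K` approximating the identity,
provided the approximation error vanishes in measure uniformly in `n`. -/
lemma tendsto_finiteMeasure_of_approx [Nonempty Ω] {P : ℕ → Ω → Ω} (hP : ∀ K, Continuous (P K))
    (hPid : ∀ ω, Tendsto (fun K => P K ω) atTop (𝓝 ω))
    (hmap : ∀ K (f : BoundedContinuousFunction Ω ℝ),
      Tendsto (fun n => ∫ ω, f (P K ω) ∂(μ n : Measure Ω)) atTop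
        (𝓝 (∫ ω, f (P K ω) ∂(ν : Measure Ω))))
    (herr : ∀ ε > 0, ∀ᶠ K in atTop, ∀ᶠ n in atTop,
      (μ n : Measure Ω).real {ω | ε < dist ω (P K ω)} ≤ ε) :
    Tendsto μ atTop (𝓝 ν) := by
  refine tendsto_finiteMeasure_of_forall_lipschitz ?_
  rintro f ⟨C, hC⟩ ⟨L, hL⟩
  let F : BoundedContinuousFunction Ω ℝ := ⟨⟨f, hL.continuous⟩, C, hC⟩
  have hlim : Tendsto (fun K => ∫ ω, F (P K ω) ∂(ν : Measure Ω)) atTop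
      (𝓝 (∫ ω, F ω ∂(ν : Measure Ω))) :=
    tendsto_integral_of_dominated_convergence (fun _ => ‖F‖)
      (fun K => (F.continuous.comp (hP K)).aestronglyMeasurable) (integrable_const _)
      (fun K => ae_of_all _ fun ω => F.norm_coe_le_norm _)
      (ae_of_all _ fun ω => (F.continuous.tendsto _).comp (hPid ω))
  have hmass : Tendsto (fun n => (μ n : Measure Ω).real univ) atTop
      (𝓝 ((ν : Measure Ω).real univ)) := by
    simpa using hmap 0 (BoundedContinuousFunction.const _ 1)
  have hC0 : 0 ≤ C := dist_nonneg.trans (hC (Classical.arbitrary Ω) (Classical.arbitrary Ω))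
  rw [Metric.tendsto_nhds]
  intro δ hδ
  set M := (ν : Measure Ω).real univ + 1
  obtain ⟨ε, hε, hεδ⟩ := exists_pos_mul_lt (by positivity : 0 < δ / 3) (L * M + C)
  obtain ⟨K, hK, hKν⟩ :=
    ((herr ε hε).and (Metric.tendsto_nhds.1 hlim (δ / 3) (by positivity))).exists
  filter_upwards [hK, Metric.tendsto_nhds.1 (hmap K F) (δ / 3) (by positivity),
    hmass.eventually_le_const (lt_add_one _)] with n hn hnK hnM
  have hdist : dist (∫ ω, F ω ∂(μ n : Measure Ω)) (∫ ω, F (P K ω) ∂(μ n : Measure Ω)) ≤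
      (L * M + C) * ε :=
    calc _ ≤ L * ε * (μ n : Measure Ω).real univ + C * (μ n : Measure Ω).real _ :=
          abs_integral_sub_integral_comp_le _ hC hL (hP K) hε.le
      _ ≤ L * ε * M + C * ε := by gcongr
      _ = _ := by ring
  calc _ ≤ _ + _ + _ := dist_triangle4 _ (∫ ω, F (P K ω) ∂(μ n : Measure Ω))
          (∫ ω, F (P K ω) ∂(ν : Measure Ω)) _
    _ < δ / 3 + δ / 3 + δ / 3 := add_lt_add (add_lt_add (hdist.trans_lt hεδ) hnK) hKν
    _ = δ := by ring

end WeakConvergence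

section FixedTime

variable {d : ℕ} {x y : Ed d} {t : ℝ} {a : ℕ → ℝ} {N : ℕ → ℕ} {z : ℕ → Fin d → ℤ} {K : ℕ}
  {Wt : ℝ → Measure (Omega2 x y)}

lemma IsPinnedWienerFamily.integral_pathChar_gridTime (hWt : IsPinnedWienerFamily x y Wt)
    (ht : 0 < t) (ξ : Fin K → Ed d) :
    ∫ ω, pathChar (gridTime K) ξ ω.1 ∂(Wt t) = pinnedCharFun x y t (gridTime K) ξ := by
  have hK : (0 : ℝ) < K + 1 := by positivity
  have h := hWt.integral_pathChar ht (n := K) (ts := fun i => i / (K + 1)) (by simp)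
    (fun i _ => by gcongr; simp) ((div_lt_one hK).2 (lt_add_one _)) ξ
  simp only [Nat.cast_add_one] at h
  exact h

/-- The joint law of the grid values under `ρ`, on the `ℓ²` product, where `charFun` is defined. -/
def gridLaw (K : ℕ) (ρ : Measure (Omega2 x y)) : Measure (PiLp 2 fun _ : Fin K => Ed d) :=
  ρ.map fun ω => WithLp.toLp 2 (gridValues K ω.1)

instance (ρ : Measure (Omega2 x y)) [IsFiniteMeasure ρ] : IsFiniteMeasure (gridLaw K ρ) := by
  unfold gridLaw
  infer_instance

lemma integral_gridLaw {F : Type*} [NormedAddCommGroup F] [NormedSpace ℝ F]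
    (ρ : Measure (Omega2 x y)) {g : (PiLp 2 fun _ : Fin K => Ed d) → F}
    (hg : AEStronglyMeasurable g (gridLaw K ρ)) :
    ∫ v, g v ∂(gridLaw K ρ) = ∫ ω, g (WithLp.toLp 2 (gridValues K ω.1)) ∂ρ :=
  integral_map ((PiLp.continuous_toLp 2 _).comp
    ((continuous_gridValues K).comp continuous_subtype_val)).aemeasurable hg

lemma charFun_gridLaw (ρ : Measure (Omega2 x y)) (ξ : PiLp 2 fun _ : Fin K => Ed d) :
    charFun (gridLaw K ρ) ξ = ∫ ω, pathChar (gridTime K) (fun j => ξ j) ω.1 ∂ρ := by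
  rw [charFun_apply, integral_gridLaw ρ (by fun_prop)]
  refine integral_congr_ae (ae_of_all _ fun ω => ?_)
  change Complex.exp ((⟪WithLp.toLp 2 (gridValues K ω.1), ξ⟫ : ℝ) * Complex.I) = _
  rw [mul_comm, real_inner_comm, PiLp.inner_apply]
  rfl

lemma DiffusiveScaling.tendsto_integral_gridValues [NeZero d] (h : DiffusiveScaling x y t a N z)
    (hWt : IsPinnedWienerFamily x y Wt) (g : BoundedContinuousFunction (Fin K → Ed d) ℝ) :
    Tendsto (fun n => ∫ ω, g (gridValues K ω.1) ∂(VxyaN x y (a n) (N n))) atTop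
      (𝓝 (∫ ω, g (gridValues K ω.1) ∂((2 : ℝ≥0∞) • Wt t))) := by
  have := (hWt t h.time_pos).1
  have : IsFiniteMeasure ((2 : ℝ≥0∞) • Wt t) := Measure.smul_finite _ ENNReal.ofNat_ne_top
  let law (ρ : Measure (Omega2 x y)) [IsFiniteMeasure ρ] :
    FiniteMeasure (PiLp 2 fun _ : Fin K => Ed d) := ⟨gridLaw K ρ, inferInstance⟩
  have hlim : Tendsto (fun n => law (VxyaN x y (a n) (N n))) atTop
      (𝓝 (law ((2 : ℝ≥0∞) • Wt t))) := by
    refine tendsto_finiteMeasure_of_tendsto_charFun fun ξ => ?_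
    simp only [law, FiniteMeasure.toMeasure_mk, charFun_gridLaw, integral_smul_measure,
      hWt.integral_pathChar_gridTime h.time_pos]
    simpa using h.tendsto_integral_pathChar gridTime_mem_Icc fun j => ξ j
  let g₂ := g.compContinuous ⟨_, PiLp.continuous_ofLp 2 fun _ : Fin K => Ed d⟩
  have hint := FiniteMeasure.tendsto_iff_forall_integral_tendsto.1 hlim g₂
  simp only [law, FiniteMeasure.toMeasure_mk,
    integral_gridLaw _ g₂.continuous.aestronglyMeasurable] at hint
  exact hint

/-- The factor `2` is due to the parity constraint: along step numbers of the other parity the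
lattice measures vanish. -/
lemma DiffusiveScaling.tendsto_integral [NeZero d] (h : DiffusiveScaling x y t a N z)
    (hWt : IsPinnedWienerFamily x y Wt) (f : BoundedContinuousFunction (Omega2 x y) ℝ) :
    Tendsto (fun n => ∫ ω, f ω ∂(VxyaN x y (a n) (N n))) atTop (𝓝 (2 * ∫ ω, f ω ∂(Wt t))) := by
  have := (hWt t h.time_pos).1
  have : IsFiniteMeasure ((2 : ℝ≥0∞) • Wt t) := Measure.smul_finite _ ENNReal.ofNat_ne_top
  have : Nonempty (Omega2 x y) := ⟨interpolate x y (Fin.elim0 : Fin 0 → Ed d)⟩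
  let μ (n : ℕ) : FiniteMeasure (Omega2 x y) := ⟨VxyaN x y (a n) (N n), inferInstance⟩
  let ν : FiniteMeasure (Omega2 x y) := ⟨(2 : ℝ≥0∞) • Wt t, inferInstance⟩
  have hlim : Tendsto μ atTop (𝓝 ν) :=
    tendsto_finiteMeasure_of_approx
      (P := fun K ω => interpolate x y (gridValues K ω.1))
      (fun K => (continuous_interpolate x y K).comp
        ((continuous_gridValues K).comp continuous_subtype_val))
      tendsto_interpolate_gridValues
      (fun K f => h.tendsto_integral_gridValues hWt
        (f.compContinuous ⟨_, continuous_interpolate x y K⟩))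
      (fun ε hε => h.eventually_interpolation_error_le hε hε)
  have hint := FiniteMeasure.tendsto_iff_forall_integral_tendsto.1 hlim f
  simpa [μ, ν, integral_smul_measure] using hint

end FixedTime

/-! ### Summation over the number of steps -/

section GeometricSums

variable {c h : ℝ}

lemma floor_div_eq_iff_mem_Ico (hh : 0 < h) {t : ℝ} (ht : 0 ≤ t) {N : ℕ} :
    ⌊t / h⌋₊ = N ↔ t ∈ Ico (N * h) ((N + 1) * h) := by
  rw [Nat.floor_eq_iff (by positivity), le_div_iff₀ hh, div_lt_iff₀ hh, mem_Ico]

lemma floor_div_eq_of_mem_Ico (hh : 0 < h) {t : ℝ} {N : ℕ} (ht : t ∈ Ico (N * h) ((N + 1) * h)) :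
    ⌊t / h⌋₊ = N :=
  (floor_div_eq_iff_mem_Ico hh ((by positivity : 0 ≤ N * h).trans ht.1)).2 ht

lemma iUnion_Ico_natCast_mul (hh : 0 < h) :
    ⋃ N : ℕ, Ico (N * h) ((N + 1) * h) = Ici 0 := by
  ext t
  rw [mem_iUnion]
  exact ⟨fun ⟨N, hN⟩ => (by positivity : 0 ≤ N * h).trans hN.1,
    fun ht => ⟨_, (floor_div_eq_iff_mem_Ico hh ht).1 rfl⟩⟩

lemma setIntegral_exp_neg_mul_Ico (hc : c ≠ 0) (hh : 0 ≤ h) (N : ℕ) :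
    ∫ t in Ico (N * h) ((N + 1) * h), Real.exp (-c * t) =
      Real.exp (-(c * h)) ^ N * (1 - Real.exp (-(c * h))) / c := by
  have hle : N * h ≤ (N + 1) * h := by gcongr; linarith
  rw [integral_Ico_eq_integral_Ioo, ← integral_Ioc_eq_integral_Ioo,
    ← intervalIntegral.integral_of_le hle,
    intervalIntegral.integral_comp_mul_left (fun t => Real.exp t) (neg_ne_zero.2 hc),
    integral_exp, (by ring : -c * ((N + 1) * h) = N * -(c * h) + -(c * h)),
    (by ring : -c * (N * h) = N * -(c * h)), Real.exp_add, Real.exp_nat_mul, smul_eq_mul]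
  field_simp
  ring

lemma measurable_comp_floor_div {β : Type*} [MeasurableSpace β] (φ : ℕ → β) (h : ℝ) :
    Measurable fun t : ℝ => φ ⌊t / h⌋₊ :=
  (measurable_from_nat (f := φ)).comp (Nat.measurable_floor.comp (measurable_id.div_const h))

lemma hasSum_integral_exp_mul_floor (hc : 0 < c) (hh : 0 < h) {φ : ℕ → ℝ} {B : ℝ}
    (hφ : ∀ N, |φ N| ≤ B) :
    HasSum (fun N : ℕ => Real.exp (-(c * h)) ^ N * (1 - Real.exp (-(c * h))) / c * φ N)
      (∫ t in Ioi (0 : ℝ), Real.exp (-c * t) * φ ⌊t / h⌋₊) := by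
  have hdisj : Pairwise (Function.onFun Disjoint fun N : ℕ => Ico (N * h) ((N + 1) * h)) :=
    fun N N' hne => disjoint_left.2 fun t ht ht' =>
      hne ((floor_div_eq_of_mem_Ico hh ht).symm.trans (floor_div_eq_of_mem_Ico hh ht'))
  have hint : IntegrableOn (fun t => Real.exp (-c * t) * φ ⌊t / h⌋₊) (Ici 0) := by
    rw [integrableOn_Ici_iff_integrableOn_Ioi]
    exact (exp_neg_integrableOn_Ioi 0 hc).mul_bdd (c := B)
      (measurable_comp_floor_div φ h).aestronglyMeasurable (ae_of_all _ fun t => hφ _)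
  have hsum := hasSum_integral_iUnion (μ := volume) (fun N : ℕ => measurableSet_Ico) hdisj
    (by rwa [iUnion_Ico_natCast_mul hh])
  rw [iUnion_Ico_natCast_mul hh, integral_Ici_eq_integral_Ioi] at hsum
  refine hsum.congr_fun fun N => ?_
  rw [← setIntegral_exp_neg_mul_Ico hc.ne' hh.le, ← integral_mul_const]
  refine setIntegral_congr_fun measurableSet_Ico fun t ht => ?_
  simp only [floor_div_eq_of_mem_Ico hh ht]

lemma hasSum_pow_mul_add_succ {q S : ℝ} (hq : q ≠ 0) {J : ℕ → ℝ} (hJ : J 0 = 0)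
    (h : HasSum (fun N => q ^ (N + 1) * J (N + 1)) S) :
    HasSum (fun N => q ^ N * (J N + J (N + 1))) ((1 + q⁻¹) * S) := by
  have hS : HasSum (fun N => q ^ N * J N) S := by
    rw [← hasSum_nat_add_iff' 1]
    simpa [hJ] using h
  rw [one_add_mul]
  refine (hS.add (h.mul_left q⁻¹)).congr_fun fun N => ?_
  rw [pow_succ']
  field_simp

lemma tendsto_natCast_mul_of_floor_div {α : Type*} {l : Filter α} {h : α → ℝ}
    (hpos : ∀ n, 0 < h n) (hzero : Tendsto h l (𝓝 0)) {t : ℝ} (ht : 0 ≤ t) {N : α → ℕ}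
    (hN : ∀ n, N n = ⌊t / h n⌋₊ ∨ N n = ⌊t / h n⌋₊ + 1) :
    Tendsto (fun n => N n * h n) l (𝓝 t) := by
  refine tendsto_of_tendsto_of_tendsto_of_le_of_le (g := fun n => t - h n) (h := fun n => t + h n)
    (by simpa using hzero.const_sub t) (by simpa using hzero.const_add t) (fun n => ?_) fun n => ?_
  · have hlt := (div_lt_iff₀ (hpos n)).1 (Nat.lt_floor_add_one (t / h n))
    have hle : ((⌊t / h n⌋₊ : ℕ) : ℝ) ≤ N n := Nat.cast_le.2 (by have := hN n; omega)
    nlinarith [hpos n]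
  · have hge := (le_div_iff₀ (hpos n)).1 (Nat.floor_le (div_nonneg ht (hpos n).le))
    have hle : (N n : ℝ) ≤ (⌊t / h n⌋₊ : ℕ) + 1 := by
      exact_mod_cast (by have := hN n; omega : N n ≤ ⌊t / h n⌋₊ + 1)
    nlinarith [hpos n]

end GeometricSums

section MassBounds

variable {d : ℕ} [NeZero d] {x y : Ed d} {a : ℝ}

lemma VxyaN_real_univ (ha : 0 < a) {z : Fin d → ℤ} (hz : ∀ k, (y - x) k = a * z k) (N : ℕ) :
    (VxyaN x y a N).real univ = a ^ (-(d : ℝ)) * walkProb (Fin N) z := by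
  simpa [walkProb, freq, Pi.one_def] using integral_VxyaN ha hz N fun _ => (1 : ℝ)

lemma VxyaN_eq_zero_of_odd (ha : 0 < a) {z : Fin d → ℤ} (hz : ∀ k, (y - x) k = a * z k) {N : ℕ}
    (hodd : ¬Even ((N : ℤ) - ∑ k, z k)) : VxyaN x y a N = 0 := by
  rw [← Measure.measure_univ_eq_zero, ← measureReal_eq_zero_iff, VxyaN_real_univ ha hz,
    walkProb_eq_zero_of_odd (by rwa [Fintype.card_fin]), mul_zero]

omit [NeZero d] in
lemma VxyaN_zero (hxy : x ≠ y) (a : ℝ) : VxyaN x y a 0 = 0 := by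
  have : IsEmpty {s : Fin 0 → Fin d × Bool // x + ∑ i, stepVec a (s i) = y} :=
    ⟨fun s => hxy (by simpa using s.2)⟩
  rw [VxyaN, Measure.sum_of_isEmpty]

lemma exists_VxyaN_real_univ_le (hxy : x ≠ y) : ∃ B : ℝ, ∀ (a : ℝ) (z : Fin d → ℤ), 0 < a →
    (∀ k, (y - x) k = a * z k) → ∀ N, (VxyaN x y a N).real univ ≤ B := by
  obtain ⟨c, hc⟩ : ∃ c, (y - x) c ≠ 0 := by
    by_contra! hcon
    exact hxy (sub_eq_zero.1 (by ext k; simpa using hcon k)).symm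
  obtain ⟨B, hB⟩ := exists_rescaled_walkProb_le c (abs_pos.2 hc)
  refine ⟨B, fun a z ha hz N => ?_⟩
  rw [VxyaN_real_univ ha hz]
  exact hB a N z ha (by rw [hz c, abs_mul, abs_of_pos ha])

end MassBounds

section PairedIntegral

variable {d : ℕ} {x y : Ed d} {a B : ℝ}

/-- The integral of `f` against `V'_{x,y,a,N} + V'_{x,y,a,N+1}`. Only one of these measures is
nonzero, so that pairing removes the dependence on the parity of `N`. -/
def pairedIntegral (a : ℝ) (f : BoundedContinuousFunction (Omega2 x y) ℝ) (N : ℕ) : ℝ :=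
  ∫ ω, f ω ∂(VxyaN x y a N) + ∫ ω, f ω ∂(VxyaN x y a (N + 1))

lemma abs_pairedIntegral_le [NeZero d] (hB : ∀ N, (VxyaN x y a N).real univ ≤ B)
    (f : BoundedContinuousFunction (Omega2 x y) ℝ) (N : ℕ) :
    |pairedIntegral a f N| ≤ 2 * (‖f‖ * B) := by
  have hle (N : ℕ) : |∫ ω, f ω ∂(VxyaN x y a N)| ≤ ‖f‖ * B :=
    (norm_integral_le_of_norm_le_const (ae_of_all _ f.norm_coe_le_norm)).trans
      (mul_le_mul_of_nonneg_left (hB N) (norm_nonneg f))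
  rw [two_mul]
  exact (abs_add_le _ _).trans (add_le_add (hle N) (hle (N + 1)))

lemma exists_pairedIntegral_eq [NeZero d] (ha : 0 < a) {z : Fin d → ℤ}
    (hz : ∀ k, (y - x) k = a * z k) (f : BoundedContinuousFunction (Omega2 x y) ℝ) (M : ℕ) :
    ∃ N, (N = M ∨ N = M + 1) ∧ Even ((N : ℤ) - ∑ k, z k) ∧
      pairedIntegral a f M = ∫ ω, f ω ∂(VxyaN x y a N) := by
  by_cases hM : Even ((M : ℤ) - ∑ k, z k)
  · have hsucc : ¬Even (((M + 1 : ℕ) : ℤ) - ∑ k, z k) := by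
      rw [Nat.cast_add_one, add_sub_right_comm]
      exact Int.not_even_iff_odd.2 hM.add_one
    exact ⟨M, .inl rfl, hM, by simp [pairedIntegral, VxyaN_eq_zero_of_odd ha hz hsucc]⟩
  · refine ⟨M + 1, .inr rfl, ?_, by simp [pairedIntegral, VxyaN_eq_zero_of_odd ha hz hM]⟩
    rw [Nat.cast_add_one, add_sub_right_comm]
    exact (Int.not_even_iff_odd.1 hM).add_one

lemma tendsto_pairedIntegral_floor [NeZero d] {Wt : ℝ → Measure (Omega2 x y)}
    (hWt : IsPinnedWienerFamily x y Wt) {a : ℕ → ℝ} {z : ℕ → Fin d → ℤ} (ha : ∀ n, 0 < a n)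
    (ha0 : Tendsto a atTop (𝓝 0)) (hz : ∀ n k, (y - x) k = a n * z n k) {t : ℝ} (ht : 0 < t)
    (f : BoundedContinuousFunction (Omega2 x y) ℝ) :
    Tendsto (fun n => pairedIntegral (a n) f ⌊t / (a n ^ 2 / d)⌋₊) atTop
      (𝓝 (2 * ∫ ω, f ω ∂(Wt t))) := by
  have hd : (0 : ℝ) < d := Nat.cast_pos.2 (NeZero.pos d)
  choose N hfloor hparity hN using fun n =>
    exists_pairedIntegral_eq (ha n) (hz n) f ⌊t / (a n ^ 2 / d)⌋₊
  have hscale : DiffusiveScaling x y t a N z :=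
    { time_pos := ht
      spacing_pos := ha
      spacing_tendsto := ha0
      time_tendsto := by
        simp only [mul_div_assoc]
        exact tendsto_natCast_mul_of_floor_div (fun n => by have := ha n; positivity)
          (by simpa using (ha0.pow 2).div_const (d : ℝ)) ht.le hfloor
      displacement := hz
      parity := hparity }
  simpa only [hN] using hscale.tendsto_integral hWt f

end PairedIntegral

lemma isFiniteMeasure_sum_ofReal_smul {Ω : Type*} [MeasurableSpace Ω] {w : ℕ → ℝ}
    (hw : ∀ N, 0 ≤ w N) (hsum : Summable w) {ρ : ℕ → Measure Ω} [∀ N, IsFiniteMeasure (ρ N)] {B : ℝ}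
    (hB : ∀ N, (ρ N).real univ ≤ B) :
    IsFiniteMeasure (Measure.sum fun N => ENNReal.ofReal (w N) • ρ N) := by
  refine ⟨?_⟩
  rw [Measure.sum_apply _ MeasurableSet.univ]
  refine (ENNReal.tsum_le_tsum fun N => ?_).trans_lt (hsum.mul_right B).tsum_ofReal_lt_top
  rw [Measure.smul_apply, smul_eq_mul, ENNReal.ofReal_mul (hw N), ← ofReal_measureReal]
  gcongr
  exact hB N

section Vxya

variable {d : ℕ} {x y : Ed d} {m a B : ℝ}

/-- The weight `e^{-m²a²/(2d)}` of a single lattice step in `V'_{x,y,a}`. -/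
def stepWeight (d : ℕ) (m a : ℝ) : ℝ := Real.exp (-(m ^ 2 / 2 * (a ^ 2 / d)))

lemma stepWeight_pos : 0 < stepWeight d m a := Real.exp_pos _

lemma stepWeight_lt_one [NeZero d] (hm : m ≠ 0) (ha : a ≠ 0) : stepWeight d m a < 1 := by
  have hd : (0 : ℝ) < d := Nat.cast_pos.2 (NeZero.pos d)
  rw [stepWeight, Real.exp_lt_one_iff, Left.neg_neg_iff]
  positivity

lemma tendsto_stepWeight {α : Type*} {l : Filter α} {a : α → ℝ} (ha : Tendsto a l (𝓝 0)) :
    Tendsto (fun n => stepWeight d m (a n)) l (𝓝 1) := by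
  have hexp : Continuous fun a : ℝ => stepWeight d m a := by unfold stepWeight; fun_prop
  simpa [stepWeight, Function.comp_def] using (hexp.tendsto 0).comp ha

lemma Vxya_eq (x y : Ed d) (m a : ℝ) :
    Vxya x y m a = ENNReal.ofReal (1 - stepWeight d m a) • Measure.sum fun N : ℕ =>
      ENNReal.ofReal (stepWeight d m a ^ (N + 1)) • VxyaN x y a (N + 1) := by
  have hweight : Real.exp (-m ^ 2 * a ^ 2 / (2 * d)) = stepWeight d m a := by
    rw [stepWeight]
    ring_nf
  have hpow (N : ℕ) :
      Real.exp (-m ^ 2 * a ^ 2 * (N + 1) / (2 * d)) = stepWeight d m a ^ (N + 1) := by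
    rw [stepWeight, ← Real.exp_nat_mul]
    push_cast
    ring_nf
  simp only [Vxya, hweight, hpow]

lemma hasSum_integral_Vxya [NeZero d] (hm : m ≠ 0) (ha : a ≠ 0)
    (hB : ∀ N, (VxyaN x y a N).real univ ≤ B) (f : BoundedContinuousFunction (Omega2 x y) ℝ) :
    HasSum (fun N : ℕ => stepWeight d m a ^ (N + 1) *
        ((1 - stepWeight d m a) * ∫ ω, f ω ∂(VxyaN x y a (N + 1))))
      (∫ ω, f ω ∂(Vxya x y m a)) := by
  have hw := (stepWeight_pos (d := d) (m := m) (a := a)).le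
  have hw1 := stepWeight_lt_one (d := d) hm ha
  have := isFiniteMeasure_sum_ofReal_smul (fun N => pow_nonneg hw (N + 1))
    ((summable_geometric_of_lt_one hw hw1).comp_injective (add_left_injective 1))
    fun N => hB (N + 1)
  rw [Vxya_eq, integral_smul_measure, ENNReal.toReal_ofReal (sub_nonneg.2 hw1.le), smul_eq_mul]
  refine ((hasSum_integral_measure (f.integrable _)).mul_left _).congr_fun fun N => ?_
  rw [integral_smul_measure, ENNReal.toReal_ofReal (pow_nonneg hw _), smul_eq_mul]
  ring

lemma integral_Vxya_eq [NeZero d] (hm : m ≠ 0) (hxy : x ≠ y) (ha : a ≠ 0)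
    (hB : ∀ N, (VxyaN x y a N).real univ ≤ B) (f : BoundedContinuousFunction (Omega2 x y) ℝ) :
    ∫ ω, f ω ∂(Vxya x y m a) = m ^ 2 / 2 / (1 + (stepWeight d m a)⁻¹) *
      ∫ t in Ioi (0 : ℝ), Real.exp (-(m ^ 2 / 2) * t) * pairedIntegral a f ⌊t / (a ^ 2 / d)⌋₊ := by
  have hd : (0 : ℝ) < d := Nat.cast_pos.2 (NeZero.pos d)
  have hw := stepWeight_pos (d := d) (m := m) (a := a)
  have hgeom := hasSum_pow_mul_add_succ hw.ne'
    (J := fun N => (1 - stepWeight d m a) * ∫ ω, f ω ∂(VxyaN x y a N))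
    (by simp [VxyaN_zero hxy]) (hasSum_integral_Vxya hm ha hB f)
  have hfloor := hasSum_integral_exp_mul_floor (by positivity : 0 < m ^ 2 / 2)
    (by positivity : 0 < a ^ 2 / d) (abs_pairedIntegral_le hB f)
  have hunique := hgeom.unique ((hfloor.mul_left (m ^ 2 / 2)).congr_fun fun N => by
    rw [← stepWeight, pairedIntegral]
    field_simp)
  rw [div_mul_eq_mul_div, ← hunique]
  field_simp

lemma tendsto_integral_exp_mul_pairedIntegral [NeZero d] (hm : m ≠ 0) (hxy : x ≠ y)
    {Wt : ℝ → Measure (Omega2 x y)} (hWt : IsPinnedWienerFamily x y Wt) {a : ℕ → ℝ}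
    {z : ℕ → Fin d → ℤ} (ha : ∀ n, 0 < a n) (ha0 : Tendsto a atTop (𝓝 0))
    (hz : ∀ n k, (y - x) k = a n * z n k) (f : BoundedContinuousFunction (Omega2 x y) ℝ) :
    Tendsto (fun n => ∫ t in Ioi (0 : ℝ),
        Real.exp (-(m ^ 2 / 2) * t) * pairedIntegral (a n) f ⌊t / (a n ^ 2 / d)⌋₊) atTop
      (𝓝 (∫ t in Ioi (0 : ℝ), Real.exp (-(m ^ 2 / 2) * t) * (2 * ∫ ω, f ω ∂(Wt t)))) := by
  obtain ⟨B, hB⟩ := exists_VxyaN_real_univ_le hxy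
  refine tendsto_integral_of_dominated_convergence
    (fun t => Real.exp (-(m ^ 2 / 2) * t) * (2 * (‖f‖ * B))) (fun n => ?_)
    ((exp_neg_integrableOn_Ioi 0 (by positivity)).mul_const _) (fun n => ae_of_all _ fun t => ?_) ?_
  · exact ((Real.measurable_exp.comp (measurable_id.const_mul _)).mul
      (measurable_comp_floor_div _ _)).aestronglyMeasurable
  · rw [norm_mul, Real.norm_eq_abs, Real.abs_exp]
    gcongr
    exact abs_pairedIntegral_le (hB _ _ (ha n) (hz n)) f _
  · filter_upwards [ae_restrict_mem measurableSet_Ioi] with t ht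
    exact (tendsto_pairedIntegral_floor hWt ha ha0 hz ht f).const_mul _

lemma tendsto_integral_Vxya [NeZero d] (hm : m ≠ 0) (hxy : x ≠ y)
    {Wt : ℝ → Measure (Omega2 x y)} (hWt : IsPinnedWienerFamily x y Wt) {a : ℕ → ℝ}
    {z : ℕ → Fin d → ℤ} (ha : ∀ n, 0 < a n) (ha0 : Tendsto a atTop (𝓝 0))
    (hz : ∀ n k, (y - x) k = a n * z n k) (f : BoundedContinuousFunction (Omega2 x y) ℝ) :
    Tendsto (fun n => ∫ ω, f ω ∂(Vxya x y m (a n))) atTop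
      (𝓝 (m ^ 2 / 2 * ∫ t in Ioi (0 : ℝ), Real.exp (-m ^ 2 * t / 2) * ∫ ω, f ω ∂(Wt t))) := by
  obtain ⟨B, hB⟩ := exists_VxyaN_real_univ_le hxy
  have hweight : Tendsto (fun n => m ^ 2 / 2 / (1 + (stepWeight d m (a n))⁻¹)) atTop
      (𝓝 (m ^ 2 / 2 / 2)) := by
    have hdenom := ((tendsto_stepWeight (d := d) (m := m) ha0).inv₀ one_ne_zero).const_add 1
    rw [inv_one, one_add_one_eq_two] at hdenom
    exact tendsto_const_nhds.div hdenom two_ne_zero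
  have hlim := hweight.mul (tendsto_integral_exp_mul_pairedIntegral hm hxy hWt ha ha0 hz f)
  have hvalue : m ^ 2 / 2 / 2 * (∫ t in Ioi (0 : ℝ), Real.exp (-(m ^ 2 / 2) * t) *
      (2 * ∫ ω, f ω ∂(Wt t))) =
      m ^ 2 / 2 * ∫ t in Ioi (0 : ℝ), Real.exp (-m ^ 2 * t / 2) * ∫ ω, f ω ∂(Wt t) := by
    simp only [mul_left_comm _ (2 : ℝ), integral_const_mul, ← neg_div, div_mul_eq_mul_div]
    ring
  rw [hvalue] at hlim
  exact hlim.congr fun n =>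
    (integral_Vxya_eq hm hxy (ha n).ne' (hB _ _ (ha n) (hz n)) f).symm

end Vxya

/-- **Theorem 3.3 (hypercubic case, strong form)**: `V'_{x,y,a} → (m²/2) V'_{x,y}`
weakly as `a → 0⁺` along values of `a` with `x - y ∈ aℤ^d`, where
`V'_{x,y}(A) = ∫_0^∞ e^{-m²t/2} W_{x,y}^t(A) dt`. -/
theorem Vxya_tendsto_weakly (d : ℕ) (hd : 1 ≤ d) (m : ℝ) (hm : 0 < m)
    (x y : Ed d) (hxy : x ≠ y)
    (Wt : ℝ → Measure (Omega2 x y)) (hWt : IsPinnedWienerFamily x y Wt) :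
    ∀ f : BoundedContinuousFunction (Omega2 x y) ℝ,
      Tendsto (fun a : ℝ => ∫ ω, f ω ∂(Vxya x y m a))
        ((nhdsWithin 0 (Set.Ioi 0)) ⊓
          Filter.principal {a : ℝ | ∃ z : Fin d → ℤ, ∀ j, (x - y) j = a * (z j)})
        (nhds ((m ^ 2 / 2) *
          ∫ t in Set.Ioi (0 : ℝ), Real.exp (-m ^ 2 * t / 2) * ∫ ω, f ω ∂(Wt t))) := by
  intro f
  have : NeZero d := ⟨by omega⟩
  refine tendsto_of_seq_tendsto fun a ha => ?_
  rw [tendsto_inf, tendsto_principal, tendsto_nhdsWithin_iff] at ha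
  obtain ⟨⟨ha0, hpos⟩, hlattice⟩ := ha
  obtain ⟨n₀, hn₀⟩ := eventually_atTop.1 (hpos.and hlattice)
  choose hpos z hz using fun n => hn₀ (n + n₀) (Nat.le_add_left _ _)
  refine (tendsto_add_atTop_iff_nat n₀).1 ?_
  refine tendsto_integral_Vxya hm.ne' hxy hWt (a := fun n => a (n + n₀)) (z := fun n => -z n)
    hpos ((tendsto_add_atTop_iff_nat n₀).2 ha0) (fun n k => ?_) f
  have hk := hz n k
  simp only [PiLp.sub_apply, Pi.neg_apply, Int.cast_neg] at hk ⊢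
  linarith

end
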